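/- arXiv:2107.02616 — 4 statements merged into one kernel-verified Lean document; each statement's English description precedes it below -/
import Mathlib

section
/- For every C¹-IFS (T_1,…,T_n) on [0,1] there exists a sequence of non-negative real numbers (b_m)_{m∈ℕ} with b_m = o(m) such that for all finite words ω ∈ I^* and all x, y ∈ [0,1], e^{−b_{|ω|}} ≤ T_ω'(x)/T_ω'(y) ≤ e^{b_{|ω|}} (weak bounded distortion property). -/
open MeasureTheory Set Filter Topology
open scoped ENNReal NNReal Classical

noncomputable section

namespace Symb

/-- Finite words over the alphabet `{1,…,N}`. -/
abbrev Word (N : ℕ) := List (Fin N)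

/-- The sequence space `I^ℕ`. -/
abbrev SeqSp (N : ℕ) := ℕ → Fin N

variable {N : ℕ}

/-- The shift map on `I^ℕ`. -/
def shift (x : SeqSp N) : SeqSp N := fun k => x (k + 1)

/-- The cylinder set `[w]` of a finite word `w`. -/
def cylinder (w : Word N) : Set (SeqSp N) := {x | ∀ i : Fin w.length, x i = w.get i}

/-- Concatenation `w x` of a finite word with an infinite sequence. -/
def cat (w : Word N) (x : SeqSp N) : SeqSp N := fun k =>
  if h : k < w.length then w.get ⟨k, h⟩ else x (k - w.length)

/-- Birkhoff sum `S_m f(x) = Σ_{k<m} f(σ^k x)`. -/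
def birkhoff (f : SeqSp N → ℝ) (m : ℕ) (x : SeqSp N) : ℝ :=
  ∑ k ∈ Finset.range m, f (shift^[k] x)

/-- `S_w f = sup_{x ∈ [w]} S_{|w|} f(x)`. -/
def supBirkhoff (f : SeqSp N → ℝ) (w : Word N) : ℝ :=
  sSup (birkhoff f w.length '' cylinder w)

/-- `s_w f = inf_{x ∈ [w]} S_{|w|} f(x)`. -/
def infBirkhoff (f : SeqSp N → ℝ) (w : Word N) : ℝ :=
  sInf (birkhoff f w.length '' cylinder w)

/-- `Σ_{w ∈ Iᵐ} exp (S_w f)`. -/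
def partSum (f : SeqSp N → ℝ) (m : ℕ) : ℝ :=
  ∑ v : Fin m → Fin N, Real.exp (supBirkhoff f (List.ofFn v))

/-- The topological pressure `P(f) = lim_m (1/m) log Σ_{w ∈ Iᵐ} exp(S_w f)`
(defined via `limsup`; for continuous `f` the limit exists). -/
def pressure (f : SeqSp N → ℝ) : ℝ :=
  Filter.limsup (fun m => Real.log (partSum f m) / m) Filter.atTop

/-- `var_k(f)`, the `k`-th variation of `f`. -/
def varn (f : SeqSp N → ℝ) (k : ℕ) : ℝ :=
  sSup {d | ∃ x y : SeqSp N, (∀ i < k, x i = y i) ∧ d = |f x - f y|}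

/-- The Perron–Frobenius (transfer) operator `L_ψ f(x) = Σ_{σ y = x} e^{ψ(y)} f(y)`. -/
def transfer (ψ f : SeqSp N → ℝ) (x : SeqSp N) : ℝ :=
  ∑ j : Fin N, Real.exp (ψ (cat [j] x)) * f (cat [j] x)

/-- `L_ψ 1 = 1`. -/
def Normalized (ψ : SeqSp N → ℝ) : Prop :=
  ∀ x, ∑ j : Fin N, Real.exp (ψ (cat [j] x)) = 1

/-- `ν` is a fixed point of the dual transfer operator: `∫ L_ψ f dν = ∫ f dν`
for all continuous `f`. -/
def IsTransferFixed (ψ : SeqSp N → ℝ) (ν : MeasureTheory.Measure (SeqSp N)) : Prop :=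
  ∀ f : SeqSp N → ℝ, Continuous f → ∫ x, transfer ψ f x ∂ν = ∫ x, f x ∂ν

/-- `ψ` is Hölder continuous on `I^ℕ`: `var_k(ψ) ≤ C αᵏ` for some `α ∈ (0,1)`. -/
def HolderPotential (ψ : SeqSp N → ℝ) : Prop :=
  ∃ α ∈ Set.Ioo (0:ℝ) 1, ∃ C : ℝ, ∀ k : ℕ, varn ψ k ≤ C * α ^ k

end Symb

namespace Symb

/-- A `C¹` iterated function system on `[0,1]`. -/
structure C1IFS (N : ℕ) where
  T : Fin N → ℝ → ℝ
  T' : Fin N → ℝ → ℝ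
  maps_into : ∀ i, Set.MapsTo (T i) (Set.Icc 0 1) (Set.Icc 0 1)
  hderiv : ∀ i, ∀ x ∈ Set.Icc (0:ℝ) 1, HasDerivWithinAt (T i) (T' i x) (Set.Icc 0 1) x
  cont_deriv : ∀ i, ContinuousOn (T' i) (Set.Icc 0 1)
  contracting : ∀ i, ∃ r < (1:ℝ), ∀ x ∈ Set.Icc (0:ℝ) 1, |T' i x| ≤ r
  deriv_bdd_below : ∀ i, ∃ c > (0:ℝ), ∀ x ∈ Set.Icc (0:ℝ) 1, c ≤ |T' i x|

variable {N : ℕ}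

/-- The IFS is non-trivial: at least two maps and no common fixed point. -/
def C1IFS.NontrivialIFS (Φ : C1IFS N) : Prop :=
  2 ≤ N ∧ ¬ ∃ x ∈ Set.Icc (0:ℝ) 1, ∀ i, Φ.T i x = x

/-- The IFS is `C^{1+γ}`: every `T_i'` is `γ`-Hölder for some `γ ∈ (0,1)`. -/
def C1IFS.IsC1gamma (Φ : C1IFS N) : Prop :=
  ∃ γ ∈ Set.Ioo (0:ℝ) 1, ∃ C : ℝ, ∀ i, ∀ x ∈ Set.Icc (0:ℝ) 1, ∀ y ∈ Set.Icc (0:ℝ) 1,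
    |Φ.T' i x - Φ.T' i y| ≤ C * |x - y| ^ γ

/-- `T_w = T_{w₁} ∘ ⋯ ∘ T_{w_k}`. -/
def wordMap (Φ : C1IFS N) : Word N → ℝ → ℝ
  | [] => id
  | i :: w => Φ.T i ∘ wordMap Φ w

/-- `T_w'`, the derivative of `T_w` (by the chain rule). -/
def wordDeriv (Φ : C1IFS N) : Word N → ℝ → ℝ
  | [] => fun _ => 1
  | i :: w => fun x => Φ.T' i (wordMap Φ w x) * wordDeriv Φ w x

/-- `π` is the natural coding map of the IFS:  `π(x) ∈ T_{x|m}([0,1])` for all `m`. -/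
def IsCoding (Φ : C1IFS N) (π : SeqSp N → ℝ) : Prop :=
  ∀ x : SeqSp N, ∀ m : ℕ, π x ∈ wordMap Φ (List.ofFn fun i : Fin m => x i) '' Set.Icc 0 1

/-- The geometric potential `φ(ω) = log |T'_{ω₁}(π(σω))|`. -/
def geomPot (Φ : C1IFS N) (π : SeqSp N → ℝ) (x : SeqSp N) : ℝ :=
  Real.log |Φ.T' (x 0) (π (shift x))|

/-- The open set condition with feasible open set `(0,1)`. -/
def OSC (Φ : C1IFS N) : Prop :=
  ∀ i j, i ≠ j → Disjoint (Φ.T i '' Set.Ioo 0 1) (Φ.T j '' Set.Ioo 0 1)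

/-- Left endpoint of the interval `I_w = T_w([0,1])`. -/
def aW (Φ : C1IFS N) (w : Word N) : ℝ := sInf (wordMap Φ w '' Set.Icc 0 1)

/-- Right endpoint of the interval `I_w = T_w([0,1])`. -/
def bW (Φ : C1IFS N) (w : Word N) : ℝ := sSup (wordMap Φ w '' Set.Icc 0 1)

/-- `(b_m)` is a weak bounded distortion sequence for `Φ`: non-negative, `o(m)`, and
`e^{-b_{|w|}} ≤ T_w'(x)/T_w'(y) ≤ e^{b_{|w|}}` for all words `w` and `x,y ∈ [0,1]`. -/
def IsWBDPseq (Φ : C1IFS N) (b : ℕ → ℝ) : Prop :=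
  (∀ m, 0 ≤ b m) ∧ Filter.Tendsto (fun m => b m / m) Filter.atTop (nhds 0) ∧
  ∀ w : Word N, ∀ x ∈ Set.Icc (0:ℝ) 1, ∀ y ∈ Set.Icc (0:ℝ) 1,
    Real.exp (-(b w.length)) ≤ wordDeriv Φ w x / wordDeriv Φ w y ∧
    wordDeriv Φ w x / wordDeriv Φ w y ≤ Real.exp (b w.length)

end Symb
open Symb

namespace Symb

variable {N : ℕ}

lemma wordMap_mem (Φ : C1IFS N) (w : Word N) (x : ℝ) (hx : x ∈ Set.Icc (0:ℝ) 1) :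
    wordMap Φ w x ∈ Set.Icc (0:ℝ) 1 := by
  induction w with
  | nil => simpa [wordMap] using hx
  | cons i w ih => exact Φ.maps_into i ih

lemma exists_unif_contr (Φ : C1IFS N) : ∃ r : ℝ, 0 ≤ r ∧ r < 1 ∧
    ∀ i, ∀ x ∈ Set.Icc (0:ℝ) 1, |Φ.T' i x| ≤ r := by
  have h : ∀ i, ∀ᶠ r in 𝓝[<] (1:ℝ), ∀ x ∈ Set.Icc (0:ℝ) 1, |Φ.T' i x| ≤ r := by
    intro i
    obtain ⟨s, hs, h⟩ := Φ.contracting i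
    filter_upwards [Ioo_mem_nhdsLT hs] with r hr x hx
    exact (h x hx).trans hr.1.le
  have h2 := Filter.eventually_all.2 h
  obtain ⟨r, h3, h4⟩ := (h2.and (Ioo_mem_nhdsLT (zero_lt_one (α := ℝ)))).exists
  exact ⟨r, h4.1.le, h4.2, h3⟩

lemma wordMap_contr (Φ : C1IFS N) {r : ℝ} (hr : 0 ≤ r)
    (h : ∀ i, ∀ x ∈ Set.Icc (0:ℝ) 1, |Φ.T' i x| ≤ r) (w : Word N)
    (x : ℝ) (hx : x ∈ Set.Icc (0:ℝ) 1) (y : ℝ) (hy : y ∈ Set.Icc (0:ℝ) 1) :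
    |wordMap Φ w x - wordMap Φ w y| ≤ r ^ w.length := by
  induction w with
  | nil =>
    simp only [wordMap, id, List.length_nil, pow_zero]
    rw [abs_le]; constructor <;> linarith [hx.1, hx.2, hy.1, hy.2]
  | cons i w ih =>
    have := (convex_Icc (0:ℝ) 1).norm_image_sub_le_of_norm_hasDerivWithin_le
      (f := Φ.T i) (f' := Φ.T' i) (C := r) (Φ.hderiv i) (h i)
      (wordMap_mem Φ w y hy) (wordMap_mem Φ w x hx)
    simp only [Real.norm_eq_abs] at this
    calc _ ≤ _ := this
      _ ≤ r * r ^ w.length := by gcongr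
      _ = _ := by rw [List.length_cons, pow_succ']

lemma deriv_ne (Φ : C1IFS N) (i : Fin N) (x : ℝ) (hx : x ∈ Set.Icc (0:ℝ) 1) :
    Φ.T' i x ≠ 0 := by
  obtain ⟨c, hc, h⟩ := Φ.deriv_bdd_below i
  exact abs_pos.1 (hc.trans_le (h x hx))

lemma deriv_ratio_pos (Φ : C1IFS N) (i : Fin N) (x : ℝ) (hx : x ∈ Set.Icc (0:ℝ) 1)
    (y : ℝ) (hy : y ∈ Set.Icc (0:ℝ) 1) : 0 < Φ.T' i x / Φ.T' i y := by
  have hp := (isPreconnected_Icc (a := (0:ℝ)) (b := 1)).image _ (Φ.cont_deriv i)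
  have key : ∀ u ∈ Set.Icc (0:ℝ) 1, ∀ v ∈ Set.Icc (0:ℝ) 1,
      Φ.T' i u < 0 → 0 < Φ.T' i v → False := by
    intro u hu v hv h1 h2
    obtain ⟨z, hz, hz0⟩ := hp.Icc_subset (Set.mem_image_of_mem _ hu)
      (Set.mem_image_of_mem _ hv) ⟨h1.le, h2.le⟩
    exact deriv_ne Φ i z hz hz0
  rcases lt_or_gt_of_ne (deriv_ne Φ i x hx) with h1 | h1 <;>
  rcases lt_or_gt_of_ne (deriv_ne Φ i y hy) with h2 | h2
  · exact div_pos_of_neg_of_neg h1 h2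
  · exact (key x hx y hy h1 h2).elim
  · exact (key y hy x hx h2 h1).elim
  · exact div_pos h1 h2

lemma log_cont (Φ : C1IFS N) (i : Fin N) :
    ContinuousOn (fun x => Real.log (Φ.T' i x)) (Set.Icc 0 1) :=
  (Φ.cont_deriv i).log (deriv_ne Φ i)

/-- Oscillations of the log-derivatives at scale `δ`. -/
def oscSet (Φ : C1IFS N) (δ : ℝ) : Set ℝ :=
  {d | ∃ i, ∃ x ∈ Set.Icc (0:ℝ) 1, ∃ y ∈ Set.Icc (0:ℝ) 1, |x - y| ≤ δ ∧
    d = |Real.log (Φ.T' i x) - Real.log (Φ.T' i y)|}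

lemma oscSet_bdd (Φ : C1IFS N) (δ : ℝ) : BddAbove (oscSet Φ δ) := by
  have h : ∀ i, ∃ C, ∀ x ∈ Set.Icc (0:ℝ) 1, ‖Real.log (Φ.T' i x)‖ ≤ C := fun i =>
    isCompact_Icc.exists_bound_of_continuousOn (log_cont Φ i)
  choose C hC using h
  obtain ⟨M, hM⟩ := (Set.finite_range C).bddAbove
  refine ⟨M + M, ?_⟩
  rintro d ⟨i, x, hx, y, hy, -, rfl⟩
  have hMi := hM (Set.mem_range_self i)
  exact (norm_sub_le _ _).trans
    (add_le_add ((hC i x hx).trans hMi) ((hC i y hy).trans hMi))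

lemma osc_nonneg (Φ : C1IFS N) (δ : ℝ) : 0 ≤ sSup (oscSet Φ δ) := by
  apply Real.sSup_nonneg
  rintro d ⟨i, x, hx, y, hy, -, rfl⟩
  exact abs_nonneg _

lemma osc_small (Φ : C1IFS N) {ε : ℝ} (hε : 0 < ε) :
    ∀ᶠ δ in 𝓝 (0:ℝ), sSup (oscSet Φ δ) ≤ ε := by
  have h : ∀ i, ∀ᶠ δ in 𝓝 (0:ℝ), ∀ x ∈ Set.Icc (0:ℝ) 1, ∀ y ∈ Set.Icc (0:ℝ) 1,
      |x - y| ≤ δ → |Real.log (Φ.T' i x) - Real.log (Φ.T' i y)| ≤ ε := by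
    intro i
    have hu := isCompact_Icc.uniformContinuousOn_of_continuous (log_cont Φ i)
    rw [Metric.uniformContinuousOn_iff] at hu
    obtain ⟨η, hη, hu⟩ := hu ε hε
    filter_upwards [Iio_mem_nhds hη] with δ hδ x hx y hy hxy
    exact (hu x hx y hy (lt_of_le_of_lt hxy hδ)).le
  filter_upwards [Filter.eventually_all.2 h] with δ hδ
  apply Real.sSup_le _ hε.le
  rintro d ⟨i, x, hx, y, hy, hxy, rfl⟩
  exact hδ i x hx y hy hxy

lemma osc_tendsto (Φ : C1IFS N) {r : ℝ} (hr : 0 ≤ r) (hr1 : r < 1) :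
    Tendsto (fun k : ℕ => sSup (oscSet Φ (r ^ k))) atTop (𝓝 0) := by
  have h0 := tendsto_pow_atTop_nhds_zero_of_lt_one hr hr1
  rw [Metric.tendsto_atTop']
  intro ε hε
  obtain ⟨n, hn⟩ := Filter.eventually_atTop.1 (h0.eventually (osc_small Φ (half_pos hε)))
  refine ⟨n, fun k hk => ?_⟩
  have := hn k hk.le
  rw [Real.dist_eq, sub_zero, abs_of_nonneg (osc_nonneg _ _)]
  linarith

end Symb

/-- **Lemma 4.4 (weak bounded distortion property).**  For every non-trivial `C¹`-IFS
there is a sequence `(b_m)` of non-negative numbers with `b_m = o(m)` such that for all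
finite words `w` and all `x, y ∈ [0,1]`,
`e^{-b_{|w|}} ≤ T_w'(x)/T_w'(y) ≤ e^{b_{|w|}}`. -/
theorem weak_bounded_distortion
    {N : ℕ} (Φ : C1IFS N) (hΦ : Φ.NontrivialIFS) :
    ∃ b : ℕ → ℝ, (∀ m, 0 ≤ b m) ∧
      Filter.Tendsto (fun m => b m / m) Filter.atTop (nhds 0) ∧
      ∀ w : Word N, ∀ x ∈ Set.Icc (0:ℝ) 1, ∀ y ∈ Set.Icc (0:ℝ) 1,
        Real.exp (-(b w.length)) ≤ wordDeriv Φ w x / wordDeriv Φ w y ∧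
        wordDeriv Φ w x / wordDeriv Φ w y ≤ Real.exp (b w.length) := by
  obtain ⟨r, hr, hr1, h⟩ := exists_unif_contr Φ
  refine ⟨fun m => ∑ k ∈ Finset.range m, sSup (oscSet Φ (r ^ k)),
    fun m => Finset.sum_nonneg fun k _ => osc_nonneg _ _, ?_, ?_⟩
  · refine (osc_tendsto Φ hr hr1).cesaro.congr fun m => ?_
    rw [div_eq_inv_mul]
  · intro w x hx y hy
    induction w with
    | nil => simp [wordDeriv]
    | cons i w ih =>
      have hu := wordMap_mem Φ w x hx
      have hv := wordMap_mem Φ w y hy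
      have hpos := deriv_ratio_pos Φ i _ hu _ hv
      have hosc : |Real.log (Φ.T' i (wordMap Φ w x)) - Real.log (Φ.T' i (wordMap Φ w y))|
          ≤ sSup (oscSet Φ (r ^ w.length)) :=
        le_csSup (oscSet_bdd Φ _) ⟨i, _, hu, _, hv, wordMap_contr Φ hr h w x hx y hy, rfl⟩
      rw [← Real.log_div (deriv_ne Φ i _ hu) (deriv_ne Φ i _ hv), abs_le] at hosc
      have h1 := (Real.le_log_iff_exp_le hpos).1 hosc.1
      have h2 := (Real.log_le_iff_le_exp hpos).1 hosc.2
      have e : wordDeriv Φ (i :: w) x / wordDeriv Φ (i :: w) y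
          = (wordDeriv Φ w x / wordDeriv Φ w y) *
            (Φ.T' i (wordMap Φ w x) / Φ.T' i (wordMap Φ w y)) := by
        simp only [wordDeriv]
        rw [mul_div_mul_comm, mul_comm]
      beta_reduce at ih ⊢
      rw [e, List.length_cons, Finset.sum_range_succ, neg_add, Real.exp_add, Real.exp_add]
      exact ⟨mul_le_mul ih.1 h1 (Real.exp_pos _).le ((Real.exp_pos _).le.trans ih.1),
        mul_le_mul ih.2 h2 hpos.le (Real.exp_pos _).le⟩
end
end

section
/- For m ∈ ℕ large enough, let u̲_m, ū_m > 0 be the unique solutions of Σ_{ω∈I^m} exp(u̲_m(S_ω φ + b_{|ω|} + S_ω ψ)) = 1 and Σ_{ω∈I^m} exp(ū_m(s_ω φ − b_{|ω|} + s_ω ψ)) = 1. Then lim_{m→∞} ū_m = lim_{m→∞} u̲_m = z_ρ, the unique zero of the pressure function t ↦ P(tξ) with ξ = ψ + φ. -/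
open MeasureTheory Set Filter Topology
open scoped ENNReal NNReal Classical

noncomputable section

open Symb

namespace SolAux

variable {N : ℕ}

/-- A continuous potential has small variation on long cylinders. -/
lemma exists_cyl (f : SeqSp N → ℝ) (hf : Continuous f) (ε : ℝ) (hε : 0 < ε) :
    ∃ k : ℕ, ∀ x y : SeqSp N, (∀ i < k, x i = y i) → |f x - f y| < ε := by
  letI : MetricSpace (SeqSp N) := PiNat.metricSpace
  have hu : UniformContinuous f := CompactSpace.uniformContinuous_of_continuous hf
  obtain ⟨δ, hδ, h⟩ := Metric.uniformContinuous_iff.1 hu ε hε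
  obtain ⟨k, hk⟩ := exists_pow_lt_of_lt_one hδ (by norm_num : (1/2:ℝ) < 1)
  refine ⟨k, fun x y hxy => ?_⟩
  have h1 : dist x y ≤ (1/2:ℝ)^k := by
    apply PiNat.mem_cylinder_iff_dist_le.1
    intro i hi
    exact hxy i hi
  have := h (lt_of_le_of_lt h1 hk)
  rwa [Real.dist_eq] at this

lemma bdd_f [NeZero N] (f : SeqSp N → ℝ) (hf : Continuous f) : ∃ M, ∀ x, |f x| ≤ M := by
  obtain ⟨M, hM⟩ := (isCompact_range hf.abs).bddAbove
  exact ⟨M, fun x => hM ⟨x, rfl⟩⟩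

lemma le_varn [NeZero N] (f : SeqSp N → ℝ) (hf : Continuous f) (k : ℕ) (x y : SeqSp N)
    (h : ∀ i < k, x i = y i) : |f x - f y| ≤ varn f k := by
  obtain ⟨M, hM⟩ := bdd_f f hf
  apply le_csSup
  · refine ⟨M + M, ?_⟩
    rintro d ⟨x, y, -, rfl⟩
    exact (abs_sub _ _).trans (add_le_add (hM x) (hM y))
  · exact ⟨x, y, h, rfl⟩

lemma varn_tendsto [NeZero N] (f : SeqSp N → ℝ) (hf : Continuous f) :
    Tendsto (varn f) atTop (𝓝 0) := by
  rw [Metric.tendsto_atTop]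
  intro ε hε
  obtain ⟨k, hk⟩ := exists_cyl f hf (ε / 2) (by linarith)
  refine ⟨k, fun n hn => ?_⟩
  have h0 : 0 ≤ varn f n :=
    (abs_nonneg _).trans (le_varn f hf n (fun _ => 0) (fun _ => 0) (fun _ _ => rfl))
  have h1 : varn f n ≤ ε / 2 := by
    apply csSup_le
    · exact ⟨_, fun _ => 0, fun _ => 0, fun _ _ => rfl, rfl⟩
    · rintro d ⟨x, y, h, rfl⟩
      exact (hk x y fun i hi => h i (by omega)).le
  rw [Real.dist_eq, sub_zero, abs_of_nonneg h0]
  linarith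

lemma shift_iter (k : ℕ) (x : SeqSp N) (i : ℕ) : (shift^[k] x) i = x (i + k) := by
  induction k generalizing x with
  | zero => rfl
  | succ k ih =>
    rw [Function.iterate_succ_apply, ih]
    simp only [shift]
    congr 1

/-- Birkhoff sums vary by `o(m)` on cylinders of length `m`. -/
lemma exists_err [NeZero N] (f : SeqSp N → ℝ) (hf : Continuous f) :
    ∃ E : ℕ → ℝ, Tendsto (fun m => E m / m) atTop (𝓝 0) ∧
      ∀ m (x y : SeqSp N), (∀ i < m, x i = y i) →
        |birkhoff f m x - birkhoff f m y| ≤ E m := by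
  refine ⟨fun m => ∑ j ∈ Finset.range m, varn f (j + 1), ?_, ?_⟩
  · have := ((varn_tendsto f hf).comp (tendsto_add_atTop_nat 1)).cesaro
    refine this.congr fun m => ?_
    simp only [Function.comp]
    rw [div_eq_inv_mul]
  · intro m x y h
    beta_reduce
    rw [← Finset.sum_range_reflect]
    unfold birkhoff
    rw [← Finset.sum_sub_distrib]
    refine (Finset.abs_sum_le_sum_abs _ _).trans (Finset.sum_le_sum fun k hk => ?_)
    have hk := Finset.mem_range.1 hk
    apply le_varn f hf
    intro i hi
    rw [shift_iter, shift_iter]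
    exact h _ (by omega)

/-- A point in the cylinder of `v`. -/
def pt [NeZero N] {m : ℕ} (v : Fin m → Fin N) : SeqSp N :=
  fun k => if h : k < m then v ⟨k, h⟩ else 0

lemma mem_cyl {m : ℕ} (v : Fin m → Fin N) (x : SeqSp N) :
    x ∈ cylinder (List.ofFn v) ↔ ∀ i (h : i < m), x i = v ⟨i, h⟩ := by
  constructor
  · intro hx i h
    have := hx ⟨i, by simpa using h⟩
    simpa using this
  · intro hx i
    have := hx i (by simpa using i.2)
    simpa using this

lemma pt_mem [NeZero N] {m : ℕ} (v : Fin m → Fin N) : pt v ∈ cylinder (List.ofFn v) := by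
  rw [mem_cyl]
  intro i h
  simp [pt, h]

lemma cyl_bounds [NeZero N] (f : SeqSp N → ℝ) (m : ℕ) (e : ℝ)
    (he : ∀ (x y : SeqSp N), (∀ i < m, x i = y i) → |birkhoff f m x - birkhoff f m y| ≤ e)
    (v : Fin m → Fin N) :
    |supBirkhoff f (List.ofFn v) - birkhoff f m (pt v)| ≤ e ∧
    |infBirkhoff f (List.ofFn v) - birkhoff f m (pt v)| ≤ e := by
  have hb : ∀ r ∈ birkhoff f m '' cylinder (List.ofFn v),
      birkhoff f m (pt v) - e ≤ r ∧ r ≤ birkhoff f m (pt v) + e := by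
    rintro r ⟨x, hx, rfl⟩
    have hp := pt_mem v
    rw [mem_cyl] at hx hp
    have := abs_le.1 (he x (pt v) fun i hi => by rw [hx i hi, hp i hi])
    constructor <;> linarith [this.1, this.2]
  have hm : birkhoff f m (pt v) ∈ birkhoff f m '' cylinder (List.ofFn v) := ⟨_, pt_mem v, rfl⟩
  have he0 : 0 ≤ e := by linarith [(hb _ hm).1]
  unfold supBirkhoff infBirkhoff
  rw [List.length_ofFn]
  constructor
  · rw [abs_le]
    have h1 := csSup_le ⟨_, hm⟩ fun r hr => (hb r hr).2
    have h2 := le_csSup ⟨_, fun r hr => (hb r hr).2⟩ hm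
    constructor <;> linarith
  · rw [abs_le]
    have h1 := le_csInf ⟨_, hm⟩ fun r hr => (hb r hr).1
    have h2 := csInf_le ⟨_, fun r hr => (hb r hr).1⟩ hm
    constructor <;> linarith

/-- The abstract comparison argument. -/
lemma comparison [NeZero N] (a a' p : ∀ m : ℕ, (Fin m → Fin N) → ℝ) (e : ℕ → ℝ) (c z : ℝ)
    (hc : 0 < c) (he : Tendsto (fun m => e m / m) atTop (𝓝 0))
    (ha : ∀ m v, a m v ≤ -c * m) (ha' : ∀ m v, |a' m v - a m v| ≤ e m)
    (hp : ∀ m v, |p m v - z * a m v| ≤ e m)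
    (hz : Tendsto (fun m : ℕ => Real.log (∑ v, Real.exp (p m v)) / m) atTop (𝓝 0))
    (u : ℕ → ℝ) (hu : ∀ᶠ m in atTop, ∑ v, Real.exp (u m * a' m v) = 1) :
    Tendsto u atTop (𝓝 z) := by
  rw [Metric.tendsto_nhds]
  intro ε hε
  have key : ∀ t : ℝ, ∀ᶠ m : ℕ in atTop,
      |t| * e m + e m + |Real.log (∑ v, Real.exp (p m v))| < ε * c * m ∧ e m < c * m := by
    intro t
    have h1 : Tendsto (fun m : ℕ => |t| * (e m / m) + e m / m
        + |Real.log (∑ v, Real.exp (p m v)) / m|) atTop (𝓝 0) := by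
      simpa using ((he.const_mul |t|).add he).add hz.abs
    filter_upwards [h1.eventually_lt_const (mul_pos hε hc), he.eventually_lt_const hc,
      eventually_gt_atTop 0] with m h1 h2 hm
    have hm' : (0:ℝ) < m := by exact_mod_cast hm
    constructor
    · have := mul_lt_mul_of_pos_right h1 hm'
      rw [abs_div, abs_of_pos hm'] at this
      field_simp at this
      linarith
    · rwa [div_lt_iff₀ hm'] at h2
  filter_upwards [key (z + ε), key (z - ε), hu] with m h1 h2 hu
  have hZ : 0 < ∑ v, Real.exp (p m v) :=
    Finset.sum_pos (fun _ _ => Real.exp_pos _) Finset.univ_nonempty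
  have hneg : ∀ v, a' m v ≤ 0 := by
    intro v
    have := (abs_le.1 (ha' m v)).2
    linarith [ha m v, h1.2]
  have hmul : ∀ t v, |t * a' m v - t * a m v| ≤ |t| * e m := by
    intro t v
    rw [← mul_sub, abs_mul]
    exact mul_le_mul_of_nonneg_left (ha' m v) (abs_nonneg t)
  rw [Real.dist_eq, abs_lt]
  by_contra hcon
  have hcon : u m ≤ z - ε ∨ z + ε ≤ u m := by
    by_contra hh
    push Not at hh
    exact hcon ⟨by linarith [hh.1], by linarith [hh.2]⟩
  rcases hcon with hlt | hgt
  · -- the exponent is too small, the sum exceeds one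
    have : ∑ v, Real.exp (p m v) * Real.exp (ε * c * m - |z - ε| * e m - e m)
        ≤ ∑ v, Real.exp (u m * a' m v) := by
      refine Finset.sum_le_sum fun v _ => ?_
      rw [← Real.exp_add, Real.exp_le_exp]
      have e1 := mul_le_mul_of_nonpos_right hlt (hneg v)
      have e2 := (abs_le.1 (hmul (z - ε) v)).1
      have e3 := (abs_le.1 (hp m v)).2
      have e4 := mul_le_mul_of_nonneg_left (ha m v) hε.le
      nlinarith
    rw [hu, ← Finset.sum_mul] at this
    have h3 := Real.log_le_log (mul_pos hZ (Real.exp_pos _)) this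
    rw [Real.log_mul hZ.ne' (Real.exp_pos _).ne', Real.log_exp, Real.log_one] at h3
    linarith [neg_abs_le (Real.log (∑ v, Real.exp (p m v))), h2.1]
  · have : ∑ v, Real.exp (u m * a' m v)
        ≤ ∑ v, Real.exp (p m v) * Real.exp (-(ε * c * m) + |z + ε| * e m + e m) := by
      refine Finset.sum_le_sum fun v _ => ?_
      rw [← Real.exp_add, Real.exp_le_exp]
      have e1 := mul_le_mul_of_nonpos_right hgt (hneg v)
      have e2 := (abs_le.1 (hmul (z + ε) v)).2
      have e3 := (abs_le.1 (hp m v)).1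
      have e4 := mul_le_mul_of_nonneg_left (ha m v) hε.le
      nlinarith
    rw [hu, ← Finset.sum_mul] at this
    have h3 := Real.log_le_log one_pos this
    rw [Real.log_mul hZ.ne' (Real.exp_pos _).ne', Real.log_exp, Real.log_one] at h3
    linarith [le_abs_self (Real.log (∑ v, Real.exp (p m v))), h1.1]

lemma coding_mem {Φ : C1IFS N} {π : SeqSp N → ℝ} (hπ : IsCoding Φ π) (x : SeqSp N) :
    π x ∈ Icc (0:ℝ) 1 := by
  obtain ⟨y, hy, h⟩ := hπ x 0
  have : π x = y := by
    rw [← h]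
    simp [wordMap]
  rwa [this]

lemma geomPot_continuous {Φ : C1IFS N} {π : SeqSp N → ℝ} (hπ : IsCoding Φ π)
    (hπc : Continuous π) : Continuous (geomPot Φ π) := by
  have hG : ∀ i, ContinuousOn (fun y => Real.log |Φ.T' i y|) (Icc 0 1) := by
    intro i
    obtain ⟨c, hc, h⟩ := Φ.deriv_bdd_below i
    exact (Φ.cont_deriv i).abs.log fun x hx => (lt_of_lt_of_le hc (h x hx)).ne'
  have hs : Continuous (fun x : SeqSp N => shift x) :=
    continuous_pi fun k => continuous_apply (k + 1)
  have hH : Continuous (fun q : Fin N × Icc (0:ℝ) 1 => Real.log |Φ.T' q.1 q.2|) := by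
    rw [continuous_prod_of_discrete_left]
    intro i
    exact (hG i).domRestrict
  exact hH.comp ((continuous_apply 0).prodMk
    ((hπc.comp hs).subtype_mk fun x => coding_mem hπ _))

lemma geomPot_neg {Φ : C1IFS N} {π : SeqSp N → ℝ} (hπ : IsCoding Φ π) (x : SeqSp N) :
    geomPot Φ π x < 0 := by
  obtain ⟨c, hc, h⟩ := Φ.deriv_bdd_below (x 0)
  obtain ⟨r, hr, h'⟩ := Φ.contracting (x 0)
  have hm := coding_mem hπ (shift x)
  exact Real.log_neg (lt_of_lt_of_le hc (h _ hm)) (lt_of_le_of_lt (h' _ hm) hr)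

lemma psi_nonpos {ψ : SeqSp N → ℝ} (hψ : Normalized ψ) (x : SeqSp N) : ψ x ≤ 0 := by
  have h := hψ (shift x)
  have hx : cat [x 0] (shift x) = x := by
    funext k
    cases k with
    | zero => simp [cat]
    | succ k => simp [cat, shift]
  have h1 := Finset.single_le_sum (f := fun j : Fin N => Real.exp (ψ (cat [j] (shift x))))
    (fun _ _ => (Real.exp_pos _).le) (Finset.mem_univ (x 0))
  simp only [hx, h] at h1
  exact Real.exp_le_one_iff.1 h1

end SolAux

/-- **Lemma 5.6.**  For `m` large enough let `u̲_m, ū_m > 0` be the unique solutions of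
`Σ_{ω∈Iᵐ} e^{u̲_m(S_ωφ + b_m + S_ωψ)} = 1` and `Σ_{ω∈Iᵐ} e^{ū_m(s_ωφ − b_m + s_ωψ)} = 1`.
Then `lim_m ū_m = lim_m u̲_m = z_ρ`, the unique zero of the pressure function
`t ↦ P(t(ψ+φ))`. -/
theorem solutions_tend_to_pressure_zero
    {N : ℕ} (Φ : C1IFS N) (hΦ : Φ.NontrivialIFS)
    (π : SeqSp N → ℝ) (hπ : IsCoding Φ π) (hπc : Continuous π)
    (ψ : SeqSp N → ℝ) (hψc : Continuous ψ) (hψn : Normalized ψ)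
    (b : ℕ → ℝ) (hb : IsWBDPseq Φ b)
    (φ : SeqSp N → ℝ) (hφ : φ = geomPot Φ π)
    (ulow uup : ℕ → ℝ)
    (hulow : ∀ᶠ m : ℕ in Filter.atTop, 0 < ulow m ∧
      (∑ v : Fin m → Fin N, Real.exp (ulow m *
        (supBirkhoff φ (List.ofFn v) + b m + supBirkhoff ψ (List.ofFn v)))) = 1)
    (huup : ∀ᶠ m : ℕ in Filter.atTop, 0 < uup m ∧
      (∑ v : Fin m → Fin N, Real.exp (uup m *
        (infBirkhoff φ (List.ofFn v) - b m + infBirkhoff ψ (List.ofFn v)))) = 1)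
    (z : ℝ)
    (hz : Filter.Tendsto
      (fun m => Real.log (partSum (fun x => z * (ψ x + φ x)) m) / m)
      Filter.atTop (nhds 0)) :
    Filter.Tendsto uup Filter.atTop (nhds z) ∧
    Filter.Tendsto ulow Filter.atTop (nhds z) := by
  have hN : 2 ≤ N := hΦ.1
  haveI : NeZero N := ⟨by omega⟩
  have hφc : Continuous φ := hφ ▸ SolAux.geomPot_continuous hπ hπc
  have hξc : Continuous (fun x => ψ x + φ x) := hψc.add hφc
  have hξneg : ∀ x, ψ x + φ x < 0 := fun x => by
    have h1 := SolAux.psi_nonpos hψn x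
    have h2 : φ x < 0 := hφ ▸ SolAux.geomPot_neg hπ x
    linarith
  obtain ⟨x₀, -, hx₀⟩ := isCompact_univ.exists_isMaxOn
    (⟨fun _ => 0, mem_univ _⟩ : (univ : Set (SeqSp N)).Nonempty) hξc.continuousOn
  obtain ⟨E₁, hE₁, h₁⟩ := SolAux.exists_err φ hφc
  obtain ⟨E₂, hE₂, h₂⟩ := SolAux.exists_err ψ hψc
  obtain ⟨E₃, hE₃, h₃⟩ := SolAux.exists_err (fun x => z * (ψ x + φ x))
    (continuous_const.mul hξc)
  have hnn : ∀ (E : ℕ → ℝ) (f : SeqSp N → ℝ),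
      (∀ m (x y : SeqSp N), (∀ i < m, x i = y i) →
        |birkhoff f m x - birkhoff f m y| ≤ E m) → ∀ m, 0 ≤ E m := fun E f h m =>
    (abs_nonneg _).trans (h m (fun _ => 0) (fun _ => 0) fun _ _ => rfl)
  have n₁ := hnn _ _ h₁
  have n₂ := hnn _ _ h₂
  have n₃ := hnn _ _ h₃
  have hbd : ∀ m, 0 ≤ b m := hb.1
  have he : Tendsto (fun m : ℕ => (E₁ m + E₂ m + E₃ m + b m) / m) atTop (𝓝 0) := by
    have := ((hE₁.add hE₂).add hE₃).add hb.2.1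
    simp only [add_zero] at this
    refine this.congr fun m => ?_
    ring
  have hsum : ∀ m x, birkhoff (fun x => ψ x + φ x) m x = birkhoff ψ m x + birkhoff φ m x := by
    intro m x
    simp [birkhoff, Finset.sum_add_distrib]
  have hzsum : ∀ m x, birkhoff (fun x => z * (ψ x + φ x)) m x
      = z * birkhoff (fun x => ψ x + φ x) m x := by
    intro m x
    simp [birkhoff, Finset.mul_sum]
  have hle : ∀ m (v : Fin m → Fin N), birkhoff (fun x => ψ x + φ x) m (SolAux.pt v)
      ≤ -(-(ψ x₀ + φ x₀)) * m := by
    intro m v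
    rw [neg_neg]
    have := Finset.sum_le_card_nsmul (Finset.range m)
      (fun k => ψ (shift^[k] (SolAux.pt v)) + φ (shift^[k] (SolAux.pt v))) (ψ x₀ + φ x₀)
      (fun k _ => hx₀ (mem_univ _))
    rw [Finset.card_range, nsmul_eq_mul, mul_comm] at this
    exact this
  have hp : ∀ m (v : Fin m → Fin N),
      |supBirkhoff (fun x => z * (ψ x + φ x)) (List.ofFn v)
        - z * birkhoff (fun x => ψ x + φ x) m (SolAux.pt v)| ≤ E₁ m + E₂ m + E₃ m + b m := by
    intro m v
    have := (SolAux.cyl_bounds _ m _ (h₃ m) v).1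
    rw [hzsum] at this
    linarith [n₁ m, n₂ m, hbd m]
  constructor
  · refine SolAux.comparison
      (fun m v => birkhoff (fun x => ψ x + φ x) m (SolAux.pt v))
      (fun m v => infBirkhoff φ (List.ofFn v) - b m + infBirkhoff ψ (List.ofFn v))
      (fun m v => supBirkhoff (fun x => z * (ψ x + φ x)) (List.ofFn v))
      (fun m => E₁ m + E₂ m + E₃ m + b m) (-(ψ x₀ + φ x₀)) z
      (neg_pos.2 (hξneg x₀)) he hle ?_ hp hz uup (huup.mono fun m h => h.2)
    intro m v
    have q₁ := abs_le.1 (SolAux.cyl_bounds _ m _ (h₁ m) v).2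
    have q₂ := abs_le.1 (SolAux.cyl_bounds _ m _ (h₂ m) v).2
    have := n₁ m
    have := n₂ m
    have := n₃ m
    have := hbd m
    simp only [hsum]
    rw [abs_le]
    constructor <;> linarith [q₁.1, q₁.2, q₂.1, q₂.2]
  · refine SolAux.comparison
      (fun m v => birkhoff (fun x => ψ x + φ x) m (SolAux.pt v))
      (fun m v => supBirkhoff φ (List.ofFn v) + b m + supBirkhoff ψ (List.ofFn v))
      (fun m v => supBirkhoff (fun x => z * (ψ x + φ x)) (List.ofFn v))
      (fun m => E₁ m + E₂ m + E₃ m + b m) (-(ψ x₀ + φ x₀)) z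
      (neg_pos.2 (hξneg x₀)) he hle ?_ hp hz ulow (hulow.mono fun m h => h.2)
    intro m v
    have q₁ := abs_le.1 (SolAux.cyl_bounds _ m _ (h₁ m) v).1
    have q₂ := abs_le.1 (SolAux.cyl_bounds _ m _ (h₂ m) v).1
    have := n₁ m
    have := n₂ m
    have := n₃ m
    have := hbd m
    simp only [hsum]
    rw [abs_le]
    constructor <;> linarith [q₁.1, q₁.2, q₂.1, q₂.2]
end
end

section
/- Let ρ = ν∘π⁻¹ be a weak ψ-Gibbs measure with respect to a C¹-IFS. For every set G ⊂ I^* of finite words whose cylinders form a partition of I^ℕ (i.e. ⋃_{u∈G}[u] = I^ℕ with pairwise disjoint cylinders) and every Borel set E ⊆ [0,1], ρ(E) ≥ Σ_{u∈G} c_{|u|} ν([u]) ρ(T_u^{−1}(E)), where c_n = exp(−Σ_{i=0}^{n−1} var_i(ψ)); in particular log c_n = o(n). -/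
open MeasureTheory Set Filter Topology
open scoped ENNReal NNReal Classical

noncomputable section

open Symb

namespace WG

variable {N : ℕ}

theorem cat_nil (x : SeqSp N) : cat [] x = x := by
  funext k; simp [cat]

theorem cat_cons (i : Fin N) (w : Word N) (x : SeqSp N) :
    cat (i :: w) x = cat [i] (cat w x) := by
  funext k
  cases k with
  | zero => simp [cat]
  | succ k => simp [cat]

theorem cat_single_zero (i : Fin N) (x : SeqSp N) : cat [i] x 0 = i := by simp [cat]

theorem cat_single_succ (i : Fin N) (x : SeqSp N) (k : ℕ) : cat [i] x (k + 1) = x k := by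
  simp [cat]

theorem continuous_cat (w : Word N) : Continuous (cat w : SeqSp N → SeqSp N) := by
  refine continuous_pi fun k => ?_
  unfold cat
  by_cases h : k < w.length
  · simp only [h, dif_pos]; exact continuous_const
  · simp only [h, dif_neg, not_false_eq_true]; exact continuous_apply _

theorem cat_agree (w : Word N) (x y : SeqSp N) : ∀ i < w.length, cat w x i = cat w y i := by
  intro i hi
  simp [cat, hi]

theorem measurableSet_cylinder (w : Word N) : MeasurableSet (cylinder w) := by
  have : cylinder w = ⋂ i : Fin w.length, (fun x : SeqSp N => x i) ⁻¹' {w.get i} := by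
    ext x; simp [Symb.cylinder]
  rw [this]
  exact MeasurableSet.iInter fun i => measurable_pi_apply _ (MeasurableSet.singleton _)

theorem mem_cylinder_nil (x : SeqSp N) : x ∈ cylinder ([] : Word N) := by
  intro i; exact i.elim0

theorem cat_mem_cylinder_cons (i j : Fin N) (w : Word N) (x : SeqSp N) :
    cat [j] x ∈ cylinder (i :: w) ↔ j = i ∧ x ∈ cylinder w := by
  constructor
  · intro h
    refine ⟨?_, fun k => ?_⟩
    · have := h ⟨0, by simp⟩
      simpa [cat] using this
    · have := h ⟨k + 1, by simp⟩
      simpa [cat_single_succ] using this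
  · rintro ⟨rfl, h⟩ ⟨k, hk⟩
    cases k with
    | zero => simp [cat]
    | succ k =>
      have := h ⟨k, by simpa using hk⟩
      simpa [cat_single_succ] using this

/-! Variation -/

theorem varn_bdd (f : SeqSp N → ℝ) (hf : Continuous f) (k : ℕ) :
    BddAbove {d | ∃ x y : SeqSp N, (∀ i < k, x i = y i) ∧ d = |f x - f y|} := by
  have hK : IsCompact (Set.range fun p : SeqSp N × SeqSp N => |f p.1 - f p.2|) :=
    isCompact_range (by fun_prop)
  refine hK.bddAbove.mono ?_
  rintro d ⟨x, y, -, rfl⟩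
  exact ⟨(x, y), rfl⟩

theorem le_varn (f : SeqSp N → ℝ) (hf : Continuous f) (k : ℕ) (x y : SeqSp N)
    (h : ∀ i < k, x i = y i) : |f x - f y| ≤ varn f k :=
  le_csSup (varn_bdd f hf k) ⟨x, y, h, rfl⟩

theorem varn_nonneg (f : SeqSp N → ℝ) (k : ℕ) : 0 ≤ varn f k := by
  apply Real.sSup_nonneg
  rintro d ⟨x, y, -, rfl⟩
  exact abs_nonneg _

/-- `var_k(f) → 0` for continuous `f`. -/
theorem varn_tendsto (f : SeqSp N → ℝ) (hf : Continuous f) :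
    Tendsto (varn f) atTop (𝓝 0) := by
  rw [Metric.tendsto_atTop]
  intro ε hε
  -- near each point, f is within ε/4 on a cylinder
  have h1 : ∀ x : SeqSp N, ∃ n : ℕ, ∀ y : SeqSp N, (∀ i < n, y i = x i) → |f y - f x| < ε / 4 := by
    intro x
    have hU : {y | |f y - f x| < ε / 4} ∈ 𝓝 x := by
      apply IsOpen.mem_nhds
      · exact isOpen_lt (by fun_prop) continuous_const
      · simp; linarith
    rw [nhds_pi, Filter.mem_pi] at hU
    obtain ⟨I, hI, t, ht, hsub⟩ := hU
    obtain ⟨M, hM⟩ := hI.bddAbove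
    refine ⟨M + 1, fun y hy => hsub ?_⟩
    intro i hi
    rw [hy i (Nat.lt_succ_of_le (hM hi))]
    exact mem_of_mem_nhds (ht i)
  choose n hn using h1
  have hopen : ∀ x : SeqSp N, IsOpen {y : SeqSp N | ∀ i < n x, y i = x i} := by
    intro x
    have : {y : SeqSp N | ∀ i < n x, y i = x i}
        = ⋂ i ∈ Finset.range (n x), (fun y : SeqSp N => y i) ⁻¹' {x i} := by
      ext y; simp
    rw [this]
    exact isOpen_biInter_finset fun i _ => (isOpen_discrete _).preimage (continuous_apply i)
  obtain ⟨t, ht⟩ := isCompact_univ.elim_finite_subcover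
    (fun x : SeqSp N => {y : SeqSp N | ∀ i < n x, y i = x i}) hopen
    (fun x _ => mem_iUnion.2 ⟨x, fun _ _ => rfl⟩)
  refine ⟨t.sup n, fun k hk => ?_⟩
  rw [Real.dist_eq, sub_zero, abs_of_nonneg (varn_nonneg f k)]
  have : varn f k ≤ ε / 2 := by
    apply Real.sSup_le _ (by linarith)
    rintro d ⟨x, y, hxy, rfl⟩
    obtain ⟨z, hz, hxz⟩ := mem_iUnion₂.1 (ht (mem_univ x))
    have hxz' : ∀ i < n z, x i = z i := hxz
    have hnz : n z ≤ k := (Finset.le_sup hz).trans hk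
    have a1 := hn z x hxz'
    have a2 := hn z y (fun i hi => by rw [← hxy i (by omega)]; exact hxz' i hi)
    rw [abs_lt] at a1 a2
    rw [abs_le]
    constructor <;> linarith
  linarith

/-! Weights -/

/-- `S_{|w|} ψ (w x)`. -/
def W (ψ : SeqSp N → ℝ) : Word N → SeqSp N → ℝ
  | [] => fun _ => 0
  | i :: w => fun x => W ψ w x + ψ (cat (i :: w) x)

theorem continuous_W (ψ : SeqSp N → ℝ) (hψ : Continuous ψ) (w : Word N) :
    Continuous (W ψ w) := by
  induction w with
  | nil => exact continuous_const
  | cons i w ih => exact ih.add (hψ.comp (continuous_cat _))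

theorem W_dist (ψ : SeqSp N → ℝ) (hψ : Continuous ψ) (w : Word N) (x y : SeqSp N) :
    W ψ w x - W ψ w y ≤ ∑ i ∈ Finset.range w.length, varn ψ i := by
  induction w with
  | nil => simp [W]
  | cons i w ih =>
    rw [List.length_cons, Finset.sum_range_succ]
    have := le_varn ψ hψ w.length (cat (i :: w) x) (cat (i :: w) y)
      (fun k hk => cat_agree (i :: w) x y k (by simp; omega))
    have := (abs_le.1 this).2
    simp only [W]
    linarith

/-! Coding -/

theorem exists_rate (Φ : C1IFS N) : ∃ r : ℝ, 0 ≤ r ∧ r < 1 ∧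
    ∀ i, ∀ x ∈ Icc (0:ℝ) 1, |Φ.T' i x| ≤ r := by
  choose r hr hb using Φ.contracting
  have : ∀ s : Finset (Fin N), ∃ R : ℝ, 0 ≤ R ∧ R < 1 ∧ ∀ i ∈ s, r i ≤ R := by
    intro s
    induction s using Finset.induction_on with
    | empty => exact ⟨0, le_rfl, one_pos, by simp⟩
    | insert a s _ ih =>
      obtain ⟨R, h0, h1, h2⟩ := ih
      refine ⟨max R (r a), le_max_of_le_left h0, max_lt h1 (hr a), ?_⟩
      intro i hi
      rcases Finset.mem_insert.1 hi with rfl | hi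
      · exact le_max_right _ _
      · exact (h2 i hi).trans (le_max_left _ _)
  obtain ⟨R, h0, h1, h2⟩ := this Finset.univ
  exact ⟨R, h0, h1, fun i x hx => (hb i x hx).trans (h2 i (Finset.mem_univ _))⟩

theorem wordMap_mapsTo (Φ : C1IFS N) (w : Word N) :
    MapsTo (wordMap Φ w) (Icc 0 1) (Icc 0 1) := by
  induction w with
  | nil => exact mapsTo_id _
  | cons i w ih => exact (Φ.maps_into i).comp ih

theorem wordMap_continuousOn (Φ : C1IFS N) (w : Word N) :
    ContinuousOn (wordMap Φ w) (Icc 0 1) := by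
  induction w with
  | nil => exact continuousOn_id
  | cons i w ih =>
    exact ContinuousOn.comp (fun x hx => (Φ.hderiv i x hx).continuousWithinAt) ih
      (wordMap_mapsTo Φ w)

theorem wordMap_contract (Φ : C1IFS N) (r : ℝ) (h0 : 0 ≤ r)
    (hr : ∀ i, ∀ x ∈ Icc (0:ℝ) 1, |Φ.T' i x| ≤ r) (w : Word N) (x y : ℝ)
    (hx : x ∈ Icc (0:ℝ) 1) (hy : y ∈ Icc (0:ℝ) 1) :
    |wordMap Φ w x - wordMap Φ w y| ≤ r ^ w.length := by
  induction w with
  | nil =>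
    simp only [wordMap, id, List.length_nil, pow_zero]
    rw [abs_le]; constructor <;> linarith [hx.1, hx.2, hy.1, hy.2]
  | cons i w ih =>
    have := Convex.norm_image_sub_le_of_norm_hasDerivWithin_le (f := Φ.T i) (f' := Φ.T' i)
      (s := Icc (0:ℝ) 1) (C := r) (Φ.hderiv i) (hr i) (convex_Icc 0 1)
      (wordMap_mapsTo Φ w hy) (wordMap_mapsTo Φ w hx)
    simp only [Real.norm_eq_abs] at this
    simp only [wordMap, Function.comp, List.length_cons]
    rw [pow_succ']
    exact this.trans (mul_le_mul_of_nonneg_left ih h0)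

theorem coding_mem (Φ : C1IFS N) (π : SeqSp N → ℝ) (hπ : IsCoding Φ π) (x : SeqSp N) :
    π x ∈ Icc (0:ℝ) 1 := by
  obtain ⟨z, hz, h⟩ := hπ x 0
  rw [← h]; exact wordMap_mapsTo Φ _ hz

theorem coding_single (Φ : C1IFS N) (π : SeqSp N → ℝ) (hπ : IsCoding Φ π) (j : Fin N)
    (x : SeqSp N) : π (cat [j] x) = Φ.T j (π x) := by
  obtain ⟨r, h0, h1, hr⟩ := exists_rate Φ
  have key : ∀ m : ℕ, |π (cat [j] x) - Φ.T j (π x)| ≤ r ^ (m + 1) := by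
    intro m
    obtain ⟨z, hz, h⟩ := hπ (cat [j] x) (m + 1)
    obtain ⟨z', hz', h'⟩ := hπ x m
    have e : (List.ofFn fun i : Fin (m + 1) => cat [j] x i)
        = j :: List.ofFn fun i : Fin m => x i := by
      rw [List.ofFn_succ]
      simp [cat]
    rw [e] at h
    have := wordMap_contract Φ r h0 hr (j :: List.ofFn fun i : Fin m => x i) z z' hz hz'
    rw [h] at this
    simp only [wordMap, Function.comp, h'] at this
    simpa using this
  have hlim : Tendsto (fun m : ℕ => r ^ (m + 1)) atTop (𝓝 0) :=
    (tendsto_pow_atTop_nhds_zero_of_lt_one h0 h1).comp (tendsto_add_atTop_nat 1)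
  have := ge_of_tendsto' hlim key
  exact sub_eq_zero.1 (abs_eq_zero.1 (le_antisymm this (abs_nonneg _)))

theorem coding_cat (Φ : C1IFS N) (π : SeqSp N → ℝ) (hπ : IsCoding Φ π) (w : Word N)
    (x : SeqSp N) : π (cat w x) = wordMap Φ w (π x) := by
  induction w with
  | nil => rw [cat_nil]; rfl
  | cons i w ih => rw [cat_cons, coding_single Φ π hπ, ih]; rfl

/-! The measure -/

/-- The dual operator applied to `ν`. -/
def dual (ψ : SeqSp N → ℝ) (ν : Measure (SeqSp N)) : Measure (SeqSp N) :=
  ∑ j : Fin N, Measure.map (cat [j])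
    (ν.withDensity fun x => ENNReal.ofReal (Real.exp (ψ (cat [j] x))))

theorem lintegral_dual (ψ : SeqSp N → ℝ) (hψ : Continuous ψ) (ν : Measure (SeqSp N))
    (f : SeqSp N → ℝ≥0∞) (hf : Measurable f) :
    ∫⁻ x, f x ∂(dual ψ ν)
      = ∑ j : Fin N, ∫⁻ x, ENNReal.ofReal (Real.exp (ψ (cat [j] x))) * f (cat [j] x) ∂ν := by
  unfold dual
  rw [lintegral_finsetSum_measure]
  refine Finset.sum_congr rfl fun j _ => ?_
  have hm := (continuous_cat [j]).measurable
  have hd : Measurable fun x : SeqSp N => ENNReal.ofReal (Real.exp (ψ (cat [j] x))) :=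
    (Continuous.measurable (by
      exact Real.continuous_exp.comp (hψ.comp (continuous_cat [j])))).ennreal_ofReal
  rw [lintegral_map hf hm]
  exact lintegral_withDensity_eq_lintegral_mul _ hd (hf.comp hm)

theorem dual_eq (ψ : SeqSp N → ℝ) (hψ : Continuous ψ) (ν : Measure (SeqSp N))
    [IsProbabilityMeasure ν] (hν : IsTransferFixed ψ ν) : ν = dual ψ ν := by
  apply ext_of_forall_lintegral_eq_of_IsFiniteMeasure
  intro f
  have hfc : Continuous fun x => ((f x : ℝ≥0) : ℝ) := by fun_prop
  have h := hν (fun x => ((f x : ℝ≥0) : ℝ)) hfc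
  rw [lintegral_dual ψ hψ ν _ (by fun_prop)]
  have hint : ∀ g : SeqSp N → ℝ, Continuous g → Integrable g ν := fun g hg =>
    hg.integrable_of_hasCompactSupport (HasCompactSupport.of_compactSpace g)
  have hcj : ∀ j : Fin N, Continuous fun x : SeqSp N =>
      Real.exp (ψ (cat [j] x)) * ((f (cat [j] x) : ℝ≥0) : ℝ) := fun j =>
    (Real.continuous_exp.comp (hψ.comp (continuous_cat [j]))).mul
      (hfc.comp (continuous_cat [j]))
  have e1 : ∫⁻ x, (f x : ℝ≥0∞) ∂ν = ENNReal.ofReal (∫ x, ((f x : ℝ≥0) : ℝ) ∂ν) := by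
    rw [ofReal_integral_eq_lintegral_ofReal (hint _ hfc) (Eventually.of_forall fun x => (f x).2)]
    simp
  rw [e1, ← h]
  unfold transfer
  rw [integral_finsetSum _ (fun j _ => hint _ (hcj j)), ENNReal.ofReal_sum_of_nonneg
    (fun j _ => integral_nonneg fun x => by positivity)]
  refine Finset.sum_congr rfl fun j _ => ?_
  rw [ofReal_integral_eq_lintegral_ofReal (hint _ (hcj j))
    (Eventually.of_forall fun x => by positivity)]
  refine lintegral_congr fun x => ?_
  rw [ENNReal.ofReal_mul (Real.exp_pos _).le]
  simp

theorem lintegral_cylinder (ψ : SeqSp N → ℝ) (hψ : Continuous ψ) (ν : Measure (SeqSp N))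
    (hd : ν = dual ψ ν) (u : Word N) : ∀ (f : SeqSp N → ℝ≥0∞), Measurable f →
    ∫⁻ x, (cylinder u).indicator f x ∂ν
      = ∫⁻ x, ENNReal.ofReal (Real.exp (W ψ u x)) * f (cat u x) ∂ν := by
  induction u with
  | nil =>
    intro f hf
    refine lintegral_congr fun x => ?_
    rw [indicator_of_mem (mem_cylinder_nil x), cat_nil]
    simp [W]
  | cons i w ih =>
    intro f hf
    have h1 : ∫⁻ x, (cylinder (i :: w)).indicator f x ∂ν
        = ∫⁻ x, (cylinder (i :: w)).indicator f x ∂(dual ψ ν) := by rw [← hd]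
    rw [h1, lintegral_dual ψ hψ ν _ (hf.indicator (measurableSet_cylinder _)),
      Finset.sum_eq_single i]
    · have hg : Measurable fun x : SeqSp N =>
          ENNReal.ofReal (Real.exp (ψ (cat [i] x))) * f (cat [i] x) :=
        (Continuous.measurable (by
          exact Real.continuous_exp.comp (hψ.comp (continuous_cat [i])))).ennreal_ofReal.mul
          (hf.comp (continuous_cat [i]).measurable)
      have h2 := ih _ hg
      have h3 : ∀ x : SeqSp N, ENNReal.ofReal (Real.exp (ψ (cat [i] x)))
          * (cylinder (i :: w)).indicator f (cat [i] x)
          = (cylinder w).indicator (fun x : SeqSp N =>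
          ENNReal.ofReal (Real.exp (ψ (cat [i] x))) * f (cat [i] x)) x := by
        intro x
        by_cases hx : x ∈ cylinder w
        · rw [indicator_of_mem hx, indicator_of_mem ((cat_mem_cylinder_cons i i w x).2 ⟨rfl, hx⟩)]
        · rw [indicator_of_notMem hx, indicator_of_notMem
            (fun h => hx ((cat_mem_cylinder_cons i i w x).1 h).2), mul_zero]
      rw [lintegral_congr h3, h2]
      refine lintegral_congr fun x => ?_
      rw [← cat_cons, ← mul_assoc, ← ENNReal.ofReal_mul (Real.exp_pos _).le, ← Real.exp_add]
      rfl
    · intro j _ hj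
      have : ∀ x : SeqSp N, ENNReal.ofReal (Real.exp (ψ (cat [j] x)))
          * (cylinder (i :: w)).indicator f (cat [j] x) = 0 := by
        intro x
        rw [indicator_of_notMem (fun h => hj ((cat_mem_cylinder_cons i j w x).1 h).1), mul_zero]
      simp [this]
    · intro h; exact absurd (Finset.mem_univ i) h

theorem quasi_bernoulli (ψ : SeqSp N → ℝ) (hψ : Continuous ψ) (ν : Measure (SeqSp N))
    [IsProbabilityMeasure ν] (hd : ν = dual ψ ν) (u : Word N) (B : Set (SeqSp N))
    (hB : MeasurableSet B) :
    ENNReal.ofReal (Real.exp (-(∑ i ∈ Finset.range u.length, varn ψ i))) * ν (cylinder u)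
      * ν (cat u ⁻¹' B) ≤ ν (B ∩ cylinder u) := by
  set C := ∑ i ∈ Finset.range u.length, varn ψ i with hC
  have hA : MeasurableSet (cat u ⁻¹' B) := (continuous_cat u).measurable hB
  have e1 : ν (cylinder u) = ∫⁻ x, ENNReal.ofReal (Real.exp (W ψ u x)) ∂ν := by
    have := lintegral_cylinder ψ hψ ν hd u 1 measurable_one
    rw [lintegral_indicator_one (measurableSet_cylinder u)] at this
    simpa using this
  have e2 : ν (B ∩ cylinder u)
      = ∫⁻ x in cat u ⁻¹' B, ENNReal.ofReal (Real.exp (W ψ u x)) ∂ν := by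
    have := lintegral_cylinder ψ hψ ν hd u (B.indicator 1) (measurable_one.indicator hB)
    rw [indicator_indicator, inter_comm,
      lintegral_indicator_one (hB.inter (measurableSet_cylinder u))] at this
    rw [this, ← lintegral_indicator hA]
    refine lintegral_congr fun x => ?_
    by_cases hx : cat u x ∈ B
    · rw [indicator_of_mem hx, indicator_of_mem (show x ∈ cat u ⁻¹' B from hx)]; simp
    · rw [indicator_of_notMem hx, indicator_of_notMem (show x ∉ cat u ⁻¹' B from hx), mul_zero]
  have hb : ∀ y, ENNReal.ofReal (Real.exp (-C)) * ν (cylinder u)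
      ≤ ENNReal.ofReal (Real.exp (W ψ u y)) := by
    intro y
    rw [e1, ← lintegral_const_mul' _ _ ENNReal.ofReal_ne_top]
    calc _ ≤ ∫⁻ _x, ENNReal.ofReal (Real.exp (W ψ u y)) ∂ν := by
          refine lintegral_mono fun x => ?_
          rw [← ENNReal.ofReal_mul (Real.exp_pos _).le, ← Real.exp_add]
          apply ENNReal.ofReal_le_ofReal
          apply Real.exp_le_exp.2
          have := W_dist ψ hψ u x y
          linarith
      _ = _ := by simp
  rw [e2]
  calc _ = ∫⁻ _x in cat u ⁻¹' B, ENNReal.ofReal (Real.exp (-C)) * ν (cylinder u) ∂ν := by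
        rw [setLIntegral_const]
    _ ≤ _ := lintegral_mono fun y => hb y

theorem map_preimage_le (Φ : C1IFS N) (π : SeqSp N → ℝ) (hπ : IsCoding Φ π) (hπc : Continuous π)
    (ν : Measure (SeqSp N)) (u : Word N) (E : Set ℝ) (hE : MeasurableSet E) :
    Measure.map π ν (wordMap Φ u ⁻¹' E) ≤ ν (cat u ⁻¹' (π ⁻¹' E)) := by
  have hr : Measurable ((Icc (0:ℝ) 1).domRestrict (wordMap Φ u)) :=
    (continuousOn_iff_continuous_domRestrict.1 (wordMap_continuousOn Φ u)).measurable
  have hm : MeasurableSet (Icc (0:ℝ) 1 ∩ wordMap Φ u ⁻¹' E) := by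
    have := measurableSet_Icc.subtype_image (hr hE)
    convert this using 1
    ext x; simp [Set.domRestrict, and_comm]
  have hm' : MeasurableSet ((Icc (0:ℝ) 1 ∩ wordMap Φ u ⁻¹' E) ∪ (Icc (0:ℝ) 1)ᶜ) :=
    hm.union measurableSet_Icc.compl
  calc Measure.map π ν (wordMap Φ u ⁻¹' E)
      ≤ Measure.map π ν ((Icc (0:ℝ) 1 ∩ wordMap Φ u ⁻¹' E) ∪ (Icc (0:ℝ) 1)ᶜ) := by
        apply measure_mono
        intro x hx
        by_cases h : x ∈ Icc (0:ℝ) 1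
        · exact Or.inl ⟨h, hx⟩
        · exact Or.inr h
    _ = ν (π ⁻¹' ((Icc (0:ℝ) 1 ∩ wordMap Φ u ⁻¹' E) ∪ (Icc (0:ℝ) 1)ᶜ)) :=
        Measure.map_apply hπc.measurable hm'
    _ ≤ _ := by
        apply measure_mono
        intro x hx
        rcases hx with hx | hx
        · show π (cat u x) ∈ E
          rw [coding_cat Φ π hπ]
          exact hx.2
        · exact absurd (coding_mem Φ π hπ x) hx

end WG


/-- **Lemma 5.8.**  For a weak `ψ`-Gibbs measure `ρ = ν∘π⁻¹`, any finite family `G` of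
words whose cylinders partition `I^ℕ` and any Borel set `E ⊆ [0,1]`,
`ρ(E) ≥ Σ_{u∈G} c_{|u|} ν([u]) ρ(T_u⁻¹(E))` with `c_n = e^{−Σ_{i<n} var_i(ψ)}`;
in particular `log c_n = o(n)`. -/
theorem weak_Gibbs_partition_inequality
    {N : ℕ} (Φ : C1IFS N) (hΦ : Φ.NontrivialIFS)
    (π : SeqSp N → ℝ) (hπ : IsCoding Φ π) (hπc : Continuous π)
    (ψ : SeqSp N → ℝ) (hψc : Continuous ψ) (hψn : Normalized ψ)
    (ν : Measure (SeqSp N)) [IsProbabilityMeasure ν] (hν : IsTransferFixed ψ ν)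
    (ρ : Measure ℝ) (hρ : ρ = Measure.map π ν)
    (c : ℕ → ℝ) (hc : ∀ n, c n = Real.exp (-(∑ i ∈ Finset.range n, varn ψ i))) :
    (∀ G : Finset (Word N),
      (⋃ u ∈ G, cylinder u) = Set.univ →
      (∀ u ∈ G, ∀ v ∈ G, u ≠ v → Disjoint (cylinder u) (cylinder v)) →
      ∀ E : Set ℝ, MeasurableSet E →
        (∑ u ∈ G, ENNReal.ofReal (c u.length) * ν (cylinder u) * ρ (wordMap Φ u ⁻¹' E))
          ≤ ρ E) ∧
    Filter.Tendsto (fun n => Real.log (c n) / n) Filter.atTop (nhds 0) := by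
  refine ⟨?_, ?_⟩
  · intro G _ hG E hE
    have hd := WG.dual_eq ψ hψc ν hν
    have hB : MeasurableSet (π ⁻¹' E) := hπc.measurable hE
    subst hρ
    rw [Measure.map_apply hπc.measurable hE]
    calc _ ≤ ∑ u ∈ G, ν (π ⁻¹' E ∩ cylinder u) := by
          refine Finset.sum_le_sum fun u _ => ?_
          rw [hc]
          exact (mul_le_mul_right (WG.map_preimage_le Φ π hπ hπc ν u E hE) _).trans
            (WG.quasi_bernoulli ψ hψc ν hd u _ hB)
      _ = ν (⋃ u ∈ G, π ⁻¹' E ∩ cylinder u) := by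
          rw [measure_biUnion_finset]
          · intro u hu v hv huv
            exact (hG u hu v hv huv).mono inter_subset_right inter_subset_right
          · exact fun u _ => hB.inter (WG.measurableSet_cylinder u)
      _ ≤ _ := measure_mono (iUnion₂_subset fun u _ => inter_subset_left)
  · have h := (WG.varn_tendsto ψ hψc).cesaro.neg
    rw [neg_zero] at h
    refine h.congr fun n => ?_
    rw [hc, Real.log_exp]
    ring
end
end

section
/- Let ρ be a weak ψ-Gibbs measure with respect to a C¹-IFS (possibly with overlaps). For every 0 < q < 1 there exists a sequence (s_n) of positive reals with log s_n = o(n) such that for every n, m ∈ ℕ and every dyadic interval Q̃ ∈ D_n: Σ_{B∈D_n, B∼Q̃} Σ_{Q∈D_{m+n}, Q⊆B} ρ(Q)^q ≥ s_n ρ(Q̃)^q min_{u∈W_n} Σ_{Q∈D_{m+n}} ρ(T_u^{−1}(Q))^q, where B ∼ Q̃ means the closures of B and Q̃ intersect. -/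
open MeasureTheory Set Filter Topology
open scoped ENNReal NNReal Classical

noncomputable section

namespace Lq

open MeasureTheory

/-- The dyadic interval `((k-1)2^{-n}, k 2^{-n}]`. -/
def dyadic (n : ℕ) (k : ℤ) : Set ℝ := Set.Ioc (((k : ℝ) - 1) / 2 ^ n) ((k : ℝ) / 2 ^ n)

/-- `Σ_{C ∈ D_n} ρ(C)^q`, the sum over dyadic intervals of positive measure. -/
def lqSum (ρ : Measure ℝ) (n : ℕ) (q : ℝ) : ℝ :=
  ∑' k : ℤ, if ρ (dyadic n k) = 0 then 0 else (ρ (dyadic n k)).toReal ^ q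

/-- `β_n^ρ(q) = (1/(n log 2)) log Σ_{C ∈ D_n} ρ(C)^q`. -/
def betaN (ρ : Measure ℝ) (n : ℕ) (q : ℝ) : ℝ :=
  Real.log (lqSum ρ n q) / (n * Real.log 2)

/-- The `L^q`-spectrum `β_ρ(q) = limsup_n β_n^ρ(q)`. -/
def beta (ρ : Measure ℝ) (q : ℝ) : ℝ :=
  Filter.limsup (fun n => betaN ρ n q) Filter.atTop

end Lq
open Symb

/-- The self-conformal set `K = π(I^ℕ)`. -/
def attractor {N : ℕ} (Φ : C1IFS N) (π : SeqSp N → ℝ) : Set ℝ := π '' Set.univ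

/-- `K_u = T_u(K)`. -/
def Ku {N : ℕ} (Φ : C1IFS N) (π : SeqSp N → ℝ) (u : Word N) : Set ℝ :=
  wordMap Φ u '' attractor Φ π

/-- `W_n = {u ∈ I^* : diam(K_u) ≤ 2^{−n} < diam(K_{u⁻})}`. -/
def Wn {N : ℕ} (Φ : C1IFS N) (π : SeqSp N → ℝ) (n : ℕ) : Set (Word N) :=
  {u | u ≠ [] ∧ Metric.diam (Ku Φ π u) ≤ 1 / 2 ^ n ∧
    1 / 2 ^ n < Metric.diam (Ku Φ π u.dropLast)}

/-- `Σ_{Q ∈ D_m} ρ(T_u⁻¹(Q))^q`. -/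
def pullbackLqSum {N : ℕ} (Φ : C1IFS N) (ρ : Measure ℝ) (u : Word N) (m : ℕ) (q : ℝ) : ℝ :=
  ∑' k : ℤ, if ρ (Lq.dyadic m k) = 0 then 0
    else (ρ (wordMap Φ u ⁻¹' Lq.dyadic m k)).toReal ^ q

namespace HB
variable {N : ℕ}

lemma cat_nil (x : SeqSp N) : cat [] x = x := by
  funext k; simp [cat]

lemma cat_single_zero (j : Fin N) (x : SeqSp N) : cat [j] x 0 = j := by simp [cat]

lemma cat_single_succ (j : Fin N) (x : SeqSp N) (k : ℕ) : cat [j] x (k + 1) = x k := by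
  simp [cat]

lemma cat_append (u v : Word N) (x : SeqSp N) : cat (u ++ v) x = cat u (cat v x) := by
  funext k
  unfold cat
  by_cases h : k < u.length
  · have h' : k < (u ++ v).length := by simp; omega
    simp only [h, h', dif_pos, List.get_eq_getElem]
    rw [List.getElem_append_left h]
  · by_cases h2 : k - u.length < v.length
    · have h' : k < (u ++ v).length := by simp; omega
      simp only [h, h', h2, dif_pos, List.get_eq_getElem, dif_neg, not_false_eq_true]
      rw [List.getElem_append_right (by omega)]
    · have h' : ¬ k < (u ++ v).length := by simp; omega
      simp only [h, h', h2, dif_neg, not_false_eq_true]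
      congr 1
      simp; omega

lemma cat_cons (j : Fin N) (w : Word N) (x : SeqSp N) :
    cat (j :: w) x = cat [j] (cat w x) := cat_append [j] w x

lemma continuous_cat (w : Word N) : Continuous (cat w) := by
  refine continuous_pi fun k => ?_
  unfold cat
  by_cases h : k < w.length
  · simp only [h, dif_pos]; exact continuous_const
  · simp only [h, dif_neg, not_false_eq_true]; exact continuous_apply _

def pre (x : SeqSp N) (m : ℕ) : Word N := List.ofFn fun i : Fin m => x i

lemma pre_length (x : SeqSp N) (m : ℕ) : (pre x m).length = m := by simp [pre]

lemma pre_succ_cat (j : Fin N) (x : SeqSp N) (m : ℕ) :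
    pre (cat [j] x) (m + 1) = j :: pre x m := by
  simp [pre, List.ofFn_succ, cat_single_zero, cat_single_succ]

lemma mem_cylinder_iff (x : SeqSp N) (w : Word N) : x ∈ cylinder w ↔ pre x w.length = w := by
  unfold Symb.cylinder pre
  constructor
  · intro h
    apply List.ext_get (by simp)
    intro n h1 h2
    have := h ⟨n, h2⟩
    simpa using this
  · intro h i
    have h2 : (List.ofFn fun i : Fin w.length => x i)[(i:ℕ)]? = w[(i:ℕ)]? := by rw [h]
    simp at h2
    simpa using h2

lemma pre_mem_cylinder (x : SeqSp N) (m : ℕ) : x ∈ cylinder (pre x m) := by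
  rw [mem_cylinder_iff, pre_length]

lemma pre_dropLast (x : SeqSp N) (m : ℕ) : (pre x (m + 1)).dropLast = pre x m := by
  unfold pre
  rw [List.ofFn_succ', List.concat_eq_append, List.dropLast_concat]
  simp

lemma pre_add (x : SeqSp N) (a b : ℕ) : ∃ v, pre x (a + b) = pre x a ++ v := by
  induction b with
  | zero => exact ⟨[], by simp⟩
  | succ b ih =>
    obtain ⟨v, hv⟩ := ih
    refine ⟨v ++ [x (a+b)], ?_⟩
    rw [← List.append_assoc, ← hv]
    unfold pre
    rw [← Nat.add_assoc a b 1, List.ofFn_succ', List.concat_eq_append]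
    simp

lemma cat_mem_cylinder (w : Word N) (x : SeqSp N) : cat w x ∈ cylinder w := by
  intro i; simp [cat]

lemma exists_cat_of_mem (w : Word N) (x : SeqSp N) (h : x ∈ cylinder w) :
    ∃ y, x = cat w y := by
  refine ⟨fun k => x (k + w.length), ?_⟩
  funext k
  unfold cat
  by_cases hk : k < w.length
  · simp only [hk, dif_pos]; exact h ⟨k, hk⟩
  · simp only [hk, dif_neg, not_false_eq_true]; congr 1; omega

lemma cat_cons_mem (i j : Fin N) (w : Word N) (x : SeqSp N) :
    cat [i] x ∈ cylinder (j :: w) ↔ i = j ∧ x ∈ cylinder w := by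
  rw [mem_cylinder_iff, mem_cylinder_iff, List.length_cons, pre_succ_cat, List.cons.injEq]

lemma measurableSet_cylinder (w : Word N) : MeasurableSet (cylinder w) := by
  unfold Symb.cylinder
  rw [Set.ofPred_forall]
  refine MeasurableSet.iInter fun i => ?_
  have h : Measurable fun x : SeqSp N => x (i : ℕ) := measurable_pi_apply _
  exact h (measurableSet_singleton (w.get i))


/-! geometry -/

lemma exists_ratio (Φ : C1IFS N) : ∃ r : ℝ, 0 ≤ r ∧ r < 1 ∧
    ∀ i, ∀ x ∈ Set.Icc (0:ℝ) 1, |Φ.T' i x| ≤ r := by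
  choose r hr hr' using Φ.contracting
  have h : ∀ s : Finset (Fin N), ∃ R : ℝ, 0 ≤ R ∧ R < 1 ∧ ∀ i ∈ s, r i ≤ R := by
    intro s
    induction s using Finset.induction_on with
    | empty => exact ⟨0, le_rfl, one_pos, by simp⟩
    | insert a s _ ih =>
      obtain ⟨R, h0, h1, h2⟩ := ih
      refine ⟨max R (r a), le_max_of_le_left h0, max_lt h1 (hr a), ?_⟩
      intro i hi
      rcases Finset.mem_insert.1 hi with rfl | hi
      · exact le_max_right _ _
      · exact le_max_of_le_left (h2 i hi)
  obtain ⟨R, h0, h1, h2⟩ := h Finset.univ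
  exact ⟨R, h0, h1, fun i x hx => (hr' i x hx).trans (h2 i (Finset.mem_univ _))⟩

lemma wordMap_append (Φ : C1IFS N) (u v : Word N) (x : ℝ) :
    wordMap Φ (u ++ v) x = wordMap Φ u (wordMap Φ v x) := by
  induction u with
  | nil => rfl
  | cons j u ih => simp only [List.cons_append, wordMap, Function.comp, ih]

lemma wordMap_mapsTo (Φ : C1IFS N) (w : Word N) :
    Set.MapsTo (wordMap Φ w) (Set.Icc 0 1) (Set.Icc 0 1) := by
  induction w with
  | nil => exact fun x hx => hx
  | cons j w ih => exact fun x hx => Φ.maps_into j (ih hx)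

lemma wordMap_lip (Φ : C1IFS N) {r : ℝ} (h0 : 0 ≤ r)
    (hr : ∀ i, ∀ x ∈ Set.Icc (0:ℝ) 1, |Φ.T' i x| ≤ r) (w : Word N) :
    ∀ x ∈ Set.Icc (0:ℝ) 1, ∀ y ∈ Set.Icc (0:ℝ) 1,
      |wordMap Φ w x - wordMap Φ w y| ≤ r ^ w.length * |x - y| := by
  induction w with
  | nil => intro x _ y _; simp [wordMap]
  | cons j w ih =>
    intro x hx y hy
    have h1 := ih x hx y hy
    have h2 := (convex_Icc (0:ℝ) 1).norm_image_sub_le_of_norm_hasDerivWithin_le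
      (f := Φ.T j) (f' := Φ.T' j) (C := r) (Φ.hderiv j) (hr j)
      (wordMap_mapsTo Φ w hy) (wordMap_mapsTo Φ w hx)
    simp only [Real.norm_eq_abs] at h2
    calc _ ≤ r * |wordMap Φ w x - wordMap Φ w y| := h2
      _ ≤ r * (r ^ w.length * |x - y|) := by gcongr
      _ = _ := by rw [List.length_cons]; ring

lemma wordMap_continuousOn (Φ : C1IFS N) (w : Word N) :
    ContinuousOn (wordMap Φ w) (Set.Icc 0 1) := by
  induction w with
  | nil => exact continuousOn_id
  | cons j w ih =>
    have : ContinuousOn (Φ.T j) (Set.Icc 0 1) := fun x hx => (Φ.hderiv j x hx).continuousWithinAt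
    exact this.comp ih (wordMap_mapsTo Φ w)

lemma pi_mem {Φ : C1IFS N} {π : SeqSp N → ℝ} (hπ : IsCoding Φ π) (x : SeqSp N) :
    π x ∈ Set.Icc (0:ℝ) 1 := by
  obtain ⟨y, hy, h⟩ := hπ x 0
  simp [wordMap] at h
  rw [← h]; exact hy

lemma pi_cat_single {Φ : C1IFS N} {π : SeqSp N → ℝ} (hπ : IsCoding Φ π) (j : Fin N)
    (x : SeqSp N) : π (cat [j] x) = Φ.T j (π x) := by
  obtain ⟨r, h0, h1, hr⟩ := exists_ratio Φ
  have key : ∀ m : ℕ, |π (cat [j] x) - Φ.T j (π x)| ≤ r ^ (m+1) := by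
    intro m
    obtain ⟨y, hy, h⟩ := hπ (cat [j] x) (m+1)
    obtain ⟨z, hz, h'⟩ := hπ x m
    change wordMap Φ (pre (cat [j] x) (m+1)) y = _ at h
    change wordMap Φ (pre x m) z = _ at h'
    rw [pre_succ_cat] at h
    have h3 : Φ.T j (π x) = wordMap Φ (j :: pre x m) z := by rw [← h']; rfl
    rw [← h, h3]
    have := wordMap_lip Φ h0 hr (j :: pre x m) y hy z hz
    rw [List.length_cons, pre_length] at this
    refine this.trans (mul_le_of_le_one_right (by positivity) ?_)
    rw [abs_le]; constructor <;> linarith [hy.1, hy.2, hz.1, hz.2]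
  have hl : Tendsto (fun m : ℕ => r ^ (m+1)) atTop (𝓝 0) :=
    (tendsto_pow_atTop_nhds_zero_of_lt_one h0 h1).comp (tendsto_add_atTop_nat 1)
  have := ge_of_tendsto' hl key
  exact sub_eq_zero.1 (abs_nonpos_iff.1 this)

lemma pi_cat {Φ : C1IFS N} {π : SeqSp N → ℝ} (hπ : IsCoding Φ π) (w : Word N)
    (x : SeqSp N) : π (cat w x) = wordMap Φ w (π x) := by
  induction w with
  | nil => rw [cat_nil]; rfl
  | cons j w ih => rw [cat_cons, pi_cat_single hπ, ih]; rfl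

lemma Ku_eq {Φ : C1IFS N} {π : SeqSp N → ℝ} (hπ : IsCoding Φ π) (u : Word N) :
    Ku Φ π u = Set.range fun x => π (cat u x) := by
  unfold Ku attractor
  simp only [pi_cat hπ, Set.image_univ]
  rw [← Set.range_comp]; rfl

lemma Ku_append {Φ : C1IFS N} {π : SeqSp N → ℝ} (hπ : IsCoding Φ π) (u v : Word N) :
    Ku Φ π (u ++ v) ⊆ Ku Φ π u := by
  rw [Ku_eq hπ, Ku_eq hπ]
  rintro _ ⟨x, rfl⟩
  exact ⟨cat v x, by simp only [cat_append]⟩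

lemma Ku_bdd {Φ : C1IFS N} {π : SeqSp N → ℝ} (hπ : IsCoding Φ π) (u : Word N) :
    Bornology.IsBounded (Ku Φ π u) := by
  refine (Metric.isBounded_Icc (0:ℝ) 1).subset ?_
  rw [Ku_eq hπ]
  rintro _ ⟨x, rfl⟩
  exact pi_mem hπ _

lemma diam_Ku_le {Φ : C1IFS N} {π : SeqSp N → ℝ} (hπ : IsCoding Φ π) {r : ℝ} (h0 : 0 ≤ r)
    (hr : ∀ i, ∀ x ∈ Set.Icc (0:ℝ) 1, |Φ.T' i x| ≤ r) (u : Word N) :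
    Metric.diam (Ku Φ π u) ≤ r ^ u.length := by
  refine Metric.diam_le_of_forall_dist_le (by positivity) ?_
  rw [Ku_eq hπ]
  rintro _ ⟨x, rfl⟩ _ ⟨y, rfl⟩
  simp only [pi_cat hπ, Real.dist_eq]
  have hy := pi_mem hπ x
  have hz := pi_mem hπ y
  refine (wordMap_lip Φ h0 hr u _ hy _ hz).trans (mul_le_of_le_one_right (by positivity) ?_)
  rw [abs_le]; constructor <;> linarith [hy.1, hy.2, hz.1, hz.2]

/-- Uniform linear bound for the length of words in `W_n`. -/
lemma exists_length_bound {Φ : C1IFS N} {π : SeqSp N → ℝ} (hπ : IsCoding Φ π) :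
    ∃ L : ℕ, 0 < L ∧ ∀ n, ∀ u ∈ Wn Φ π n, u.length ≤ L * n := by
  obtain ⟨r, h0, h1, hr⟩ := exists_ratio Φ
  obtain ⟨L, hL⟩ := exists_pow_lt_of_lt_one (show (0:ℝ) < 1/2 by norm_num) h1
  have hL0 : 0 < L := by
    rcases Nat.eq_zero_or_pos L with rfl | h
    · norm_num at hL
    · exact h
  refine ⟨L, hL0, fun n u hu => ?_⟩
  by_contra hlt
  push Not at hlt
  have h2 := hu.2.2
  have h3 := diam_Ku_le hπ h0 hr u.dropLast
  rw [List.length_dropLast] at h3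
  have h4 : r ^ (u.length - 1) ≤ r ^ (L * n) :=
    pow_le_pow_of_le_one h0 h1.le (by omega)
  have h5 : r ^ (L * n) ≤ (1/2)^n := by
    rw [pow_mul]; exact pow_le_pow_left₀ (by positivity) hL.le n
  rw [one_div_pow] at h5
  linarith

lemma Wn_finite {Φ : C1IFS N} {π : SeqSp N → ℝ} (hπ : IsCoding Φ π) (n : ℕ) :
    (Wn Φ π n).Finite := by
  obtain ⟨L, _, hL⟩ := exists_length_bound hπ
  exact (List.finite_length_le (Fin N) (L * n)).subset fun u hu => hL n u hu

lemma Wn_cover {Φ : C1IFS N} {π : SeqSp N → ℝ} (hπ : IsCoding Φ π) (n : ℕ)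
    (hne : (Wn Φ π n).Nonempty) (x : SeqSp N) : ∃ u ∈ Wn Φ π n, x ∈ cylinder u := by
  obtain ⟨r, h0, h1, hr⟩ := exists_ratio Φ
  obtain ⟨M, hM⟩ := exists_pow_lt_of_lt_one (show (0:ℝ) < 1/2^n by positivity) h1
  have hex : ∃ k, Metric.diam (Ku Φ π (pre x k)) ≤ 1 / 2 ^ n := by
    refine ⟨M, ((diam_Ku_le hπ h0 hr _).trans ?_)⟩
    rw [pre_length]; exact hM.le
  obtain ⟨v, hv⟩ := hne
  have hK : 1 / 2 ^ n < Metric.diam (Ku Φ π []) :=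
    hv.2.2.trans_le (Metric.diam_mono (Ku_append hπ [] v.dropLast) (Ku_bdd hπ _))
  obtain ⟨k, hk, hmin⟩ : ∃ k, Metric.diam (Ku Φ π (pre x k)) ≤ 1 / 2 ^ n ∧
      ∀ j < k, ¬ Metric.diam (Ku Φ π (pre x j)) ≤ 1 / 2 ^ n :=
    ⟨Nat.find hex, Nat.find_spec hex, fun j hj => Nat.find_min hex hj⟩
  rcases k with _ | k
  · exfalso
    have : pre x 0 = [] := by simp [pre]
    rw [this] at hk
    linarith
  · refine ⟨pre x (k+1), ⟨?_, hk, ?_⟩, pre_mem_cylinder _ _⟩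
    · intro h
      have := congrArg List.length h
      rw [pre_length] at this
      simp at this
    · rw [pre_dropLast]
      exact not_le.1 (hmin k (Nat.lt_succ_self k))

lemma Wn_disj_aux {Φ : C1IFS N} {π : SeqSp N → ℝ} (hπ : IsCoding Φ π) (n : ℕ)
    {u v : Word N} (hu : u ∈ Wn Φ π n) (hv : v ∈ Wn Φ π n) (x : SeqSp N)
    (hxu : x ∈ cylinder u) (hxv : x ∈ cylinder v) : v.length ≤ u.length := by
  by_contra hlt
  push Not at hlt
  rw [mem_cylinder_iff] at hxu hxv
  obtain ⟨b, hb⟩ : ∃ b, v.length = u.length + b + 1 := ⟨v.length - u.length - 1, by omega⟩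
  rw [hb] at hxv
  have h1 : v.dropLast = pre x (u.length + b) := by rw [← hxv, pre_dropLast]
  obtain ⟨w, hw⟩ := pre_add x u.length b
  rw [hxu] at hw
  have h2 := hv.2.2
  rw [h1, hw] at h2
  have := Metric.diam_mono (Ku_append hπ u w) (Ku_bdd hπ _)
  linarith [hu.2.1]

lemma Wn_disj {Φ : C1IFS N} {π : SeqSp N → ℝ} (hπ : IsCoding Φ π) (n : ℕ) :
    (Wn Φ π n).PairwiseDisjoint cylinder := by
  intro u hu v hv huv
  refine Set.disjoint_left.2 fun x hxu hxv => huv ?_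
  have h := le_antisymm (Wn_disj_aux hπ n hv hu x hxv hxu) (Wn_disj_aux hπ n hu hv x hxu hxv)
  rw [mem_cylinder_iff] at hxu hxv
  rw [← hxu, ← hxv, h]

end HB
namespace HB
variable {N : ℕ}

/-- Birkhoff sum of `ψ` along `w x`, unfolded recursively. -/
def bS (ψ : SeqSp N → ℝ) : Word N → SeqSp N → ℝ
  | [], _ => 0
  | j :: w, x => ψ (cat (j :: w) x) + bS ψ w x

def V (ψ : SeqSp N → ℝ) (k : ℕ) : ℝ := ∑ j ∈ Finset.range k, varn ψ (j + 1)

lemma le_varn {ψ : SeqSp N → ℝ} (hψ : Continuous ψ) (k : ℕ) (x y : SeqSp N)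
    (h : ∀ i < k, x i = y i) : |ψ x - ψ y| ≤ varn ψ k := by
  refine le_csSup ?_ ⟨x, y, h, rfl⟩
  obtain ⟨C, hC⟩ := (isCompact_range hψ).isBounded.exists_norm_le
  refine ⟨C + C, ?_⟩
  rintro d ⟨a, b, _, rfl⟩
  have h1 := hC _ ⟨a, rfl⟩
  have h2 := hC _ ⟨b, rfl⟩
  exact (abs_sub _ _).trans (add_le_add h1 h2)

lemma varn_nonneg (ψ : SeqSp N → ℝ) (k : ℕ) : 0 ≤ varn ψ k := by
  refine Real.sSup_nonneg ?_
  rintro d ⟨a, b, _, rfl⟩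
  exact abs_nonneg _

lemma V_mono (ψ : SeqSp N → ℝ) : Monotone (V ψ) := by
  intro a b hab
  exact Finset.sum_le_sum_of_subset_of_nonneg (Finset.range_mono hab)
    fun i _ _ => varn_nonneg ψ _

lemma varn_tendsto {ψ : SeqSp N → ℝ} (hψ : Continuous ψ) :
    Tendsto (varn ψ) atTop (𝓝 0) := by
  rw [Metric.tendsto_atTop]
  intro ε hε
  have h1 : ∀ x : SeqSp N, ∃ k, ∀ y ∈ PiNat.cylinder x k, |ψ y - ψ x| < ε / 4 := by
    intro x
    have hU : IsOpen {y | |ψ y - ψ x| < ε / 4} :=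
      isOpen_lt (by fun_prop) continuous_const
    obtain ⟨V, ⟨z, k, rfl⟩, hxV, hV⟩ := (PiNat.isTopologicalBasis_cylinders
      (fun _ : ℕ => Fin N)).exists_subset_of_mem_open (show x ∈ {y | |ψ y - ψ x| < ε / 4} by
        simp; positivity) hU
    refine ⟨k, fun y hy => hV ?_⟩
    rw [PiNat.mem_cylinder_iff_eq.1 hxV] at hy
    exact hy
  choose k hk using h1
  obtain ⟨t, ht⟩ := isCompact_univ.elim_finite_subcover
    (fun x : SeqSp N => PiNat.cylinder x (k x))
    (fun x => PiNat.isOpen_cylinder (fun _ : ℕ => Fin N) x (k x))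
    (fun x _ => Set.mem_iUnion.2 ⟨x, PiNat.self_mem_cylinder x (k x)⟩)
  refine ⟨t.sup k, fun n hn => ?_⟩
  rw [Real.dist_eq, sub_zero, abs_of_nonneg (varn_nonneg _ _)]
  have : varn ψ n ≤ ε / 2 := by
    refine Real.sSup_le ?_ (by positivity)
    rintro d ⟨a, b, hab, rfl⟩
    obtain ⟨x, hxt, hx⟩ := Set.mem_iUnion₂.1 (ht (Set.mem_univ a))
    have hkx : k x ≤ n := (Finset.le_sup hxt).trans hn
    have hb : b ∈ PiNat.cylinder x (k x) := by
      intro i hi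
      rw [← hab i (hi.trans_le hkx)]
      exact hx i hi
    have h1 := hk x a hx
    have h2 := hk x b hb
    rw [abs_lt] at h1 h2
    rw [abs_le]; constructor <;> linarith
  linarith

lemma V_tendsto {ψ : SeqSp N → ℝ} (hψ : Continuous ψ) (L : ℕ) (hL : 0 < L) :
    Tendsto (fun n : ℕ => V ψ (L * n) / n) atTop (𝓝 0) := by
  have h1 := ((varn_tendsto hψ).comp (tendsto_add_atTop_nat 1)).cesaro
  have h2 : Tendsto (fun n : ℕ => L * n) atTop atTop :=
    tendsto_id.const_mul_atTop' hL
  have h3 := (h1.comp h2).const_mul (L : ℝ)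
  rw [mul_zero] at h3
  refine h3.congr fun n => ?_
  have hL' : (L : ℝ) ≠ 0 := by positivity
  simp only [Function.comp, V]
  push_cast
  rw [mul_inv]
  field_simp

lemma bS_diff {ψ : SeqSp N → ℝ} (hψ : Continuous ψ) (w : Word N) (x y : SeqSp N) :
    bS ψ w x ≤ bS ψ w y + V ψ w.length := by
  induction w with
  | nil => simp [bS, V]
  | cons j w ih =>
    have h : |ψ (cat (j :: w) x) - ψ (cat (j :: w) y)| ≤ varn ψ (w.length + 1) := by
      refine le_varn hψ _ _ _ fun i hi => ?_
      simp [cat, hi]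
    have h2 : V ψ (w.length + 1) = V ψ w.length + varn ψ (w.length + 1) :=
      Finset.sum_range_succ _ _
    rw [List.length_cons, h2]
    simp only [bS]
    linarith [(abs_le.1 h).2]

lemma measure_eq {ψ : SeqSp N → ℝ} (hψ : Continuous ψ)
    (ν : Measure (SeqSp N)) [IsProbabilityMeasure ν] (hν : IsTransferFixed ψ ν) :
    ν = ∑ j : Fin N, Measure.map (cat [j])
      (ν.withDensity fun x => ENNReal.ofReal (Real.exp (ψ (cat [j] x)))) := by
  have hc : ∀ j : Fin N, Continuous fun x => Real.exp (ψ (cat [j] x)) := fun j =>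
    Real.continuous_exp.comp (hψ.comp (continuous_cat [j]))
  have hint : ∀ g : SeqSp N → ℝ, Continuous g → Integrable g ν := by
    intro g hg
    obtain ⟨C, hC⟩ := (isCompact_range hg).isBounded.exists_norm_le
    exact Integrable.of_bound hg.aestronglyMeasurable C (Eventually.of_forall fun x => hC _ ⟨x, rfl⟩)
  have hfin : ∀ j : Fin N, IsFiniteMeasure
      (ν.withDensity fun x => ENNReal.ofReal (Real.exp (ψ (cat [j] x)))) := fun j =>
    isFiniteMeasure_withDensity_ofReal (hint _ (hc j)).2
  have hfin2 : IsFiniteMeasure (∑ j : Fin N, Measure.map (cat [j])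
      (ν.withDensity fun x => ENNReal.ofReal (Real.exp (ψ (cat [j] x))))) := inferInstance
  refine ext_of_forall_integral_eq_of_IsFiniteMeasure fun f => ?_
  rw [← hν f f.continuous, integral_finsetSum_measure]
  · simp only [transfer]
    rw [integral_finsetSum]
    · refine Finset.sum_congr rfl fun j _ => ?_
      rw [integral_map (continuous_cat [j]).measurable.aemeasurable
        f.continuous.aestronglyMeasurable]
      rw [integral_withDensity_eq_integral_toReal_smul]
      · refine integral_congr_ae (Eventually.of_forall fun x => ?_)
        simp only [smul_eq_mul]
        rw [ENNReal.toReal_ofReal (Real.exp_pos _).le]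
      · exact (hc j).measurable.ennreal_ofReal
      · exact Eventually.of_forall fun x => ENNReal.ofReal_lt_top
    · intro j _
      exact hint _ ((hc j).mul (f.continuous.comp (continuous_cat [j])))
  · intro j _
    exact f.integrable _

lemma lint_transfer {ψ : SeqSp N → ℝ} (hψ : Continuous ψ)
    (ν : Measure (SeqSp N)) [IsProbabilityMeasure ν] (hν : IsTransferFixed ψ ν)
    (F : SeqSp N → ℝ≥0∞) (hF : Measurable F) :
    ∫⁻ x, F x ∂ν =
      ∑ j : Fin N, ∫⁻ x, ENNReal.ofReal (Real.exp (ψ (cat [j] x))) * F (cat [j] x) ∂ν := by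
  conv_lhs => rw [measure_eq hψ ν hν]
  rw [lintegral_finsetSum_measure]
  refine Finset.sum_congr rfl fun j _ => ?_
  rw [lintegral_map hF (continuous_cat [j]).measurable]
  rw [lintegral_withDensity_eq_lintegral_mul]
  · rfl
  · exact (Real.continuous_exp.comp (hψ.comp (continuous_cat [j]))).measurable.ennreal_ofReal
  · exact hF.comp (continuous_cat [j]).measurable

lemma lint_cylinder {ψ : SeqSp N → ℝ} (hψ : Continuous ψ)
    (ν : Measure (SeqSp N)) [IsProbabilityMeasure ν] (hν : IsTransferFixed ψ ν)
    (u : Word N) : ∀ (F : SeqSp N → ℝ≥0∞), Measurable F →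
    ∫⁻ x, (Symb.cylinder u).indicator F x ∂ν =
      ∫⁻ x, ENNReal.ofReal (Real.exp (bS ψ u x)) * F (cat u x) ∂ν := by
  induction u with
  | nil =>
    intro F hF
    refine lintegral_congr fun x => ?_
    have : x ∈ Symb.cylinder ([] : Word N) := fun i => i.elim0
    rw [Set.indicator_of_mem this, cat_nil]
    simp [bS]
  | cons j w ih =>
    intro F hF
    rw [lint_transfer hψ ν hν _ (hF.indicator (measurableSet_cylinder _))]
    rw [Finset.sum_eq_single j]
    · have hG : Measurable fun x => ENNReal.ofReal (Real.exp (ψ (cat [j] x))) * F (cat [j] x) :=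
        ((Real.continuous_exp.comp (hψ.comp (continuous_cat [j]))).measurable.ennreal_ofReal).mul
          (hF.comp (continuous_cat [j]).measurable)
      have h1 := ih _ hG
      calc _ = ∫⁻ x, (Symb.cylinder w).indicator
            (fun x => ENNReal.ofReal (Real.exp (ψ (cat [j] x))) * F (cat [j] x)) x ∂ν := by
            refine lintegral_congr fun x => ?_
            by_cases hx : x ∈ Symb.cylinder w
            · rw [Set.indicator_of_mem hx, Set.indicator_of_mem ((cat_cons_mem j j w x).2 ⟨rfl, hx⟩)]
            · rw [Set.indicator_of_notMem hx, Set.indicator_of_notMem, mul_zero]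
              exact fun h => hx ((cat_cons_mem j j w x).1 h).2
        _ = _ := h1
        _ = _ := by
            refine lintegral_congr fun x => ?_
            rw [← cat_cons, ← mul_assoc, ← ENNReal.ofReal_mul (Real.exp_pos _).le, ← Real.exp_add]
            simp only [bS]
            rw [add_comm]
    · intro i _ hij
      have : ∀ x, (Symb.cylinder (j :: w)).indicator F (cat [i] x) = 0 := fun x =>
        Set.indicator_of_notMem (fun h => hij ((cat_cons_mem i j w x).1 h).1) _
      simp [this]
    · simp

lemma gibbs {ψ : SeqSp N → ℝ} (hψ : Continuous ψ)
    (ν : Measure (SeqSp N)) [IsProbabilityMeasure ν] (hν : IsTransferFixed ψ ν)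
    (u : Word N) (B : Set (SeqSp N)) (hB : MeasurableSet B) :
    ENNReal.ofReal (Real.exp (-V ψ u.length)) * ν (Symb.cylinder u) * ν {x | cat u x ∈ B} ≤
      ν (Symb.cylinder u ∩ B) := by
  have hcyl := measurableSet_cylinder u
  have hBm : MeasurableSet {x | cat u x ∈ B} := (continuous_cat u).measurable hB
  have h1 : ∀ x, ENNReal.ofReal (Real.exp (-V ψ u.length)) * ν (Symb.cylinder u) ≤
      ENNReal.ofReal (Real.exp (bS ψ u x)) := by
    intro x
    have e : ν (Symb.cylinder u) = ∫⁻ y, ENNReal.ofReal (Real.exp (bS ψ u y)) ∂ν := by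
      have := lint_cylinder hψ ν hν u (fun _ => 1) measurable_const
      rw [lintegral_indicator hcyl] at this
      simpa using this
    have h2 : ν (Symb.cylinder u) ≤ ENNReal.ofReal (Real.exp (bS ψ u x + V ψ u.length)) := by
      rw [e]
      calc _ ≤ ∫⁻ y, ENNReal.ofReal (Real.exp (bS ψ u x + V ψ u.length)) ∂ν := by
            refine lintegral_mono fun y => ENNReal.ofReal_le_ofReal ?_
            exact Real.exp_le_exp.2 (bS_diff hψ u y x)
        _ = _ := by simp
    calc _ ≤ ENNReal.ofReal (Real.exp (-V ψ u.length)) *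
          ENNReal.ofReal (Real.exp (bS ψ u x + V ψ u.length)) := by gcongr
      _ = _ := by
        rw [← ENNReal.ofReal_mul (Real.exp_pos _).le, ← Real.exp_add]
        congr 2; ring
  have h3 := lint_cylinder hψ ν hν u (B.indicator fun _ => 1) (measurable_const.indicator hB)
  rw [Set.indicator_indicator, lintegral_indicator (hcyl.inter hB)] at h3
  simp only [lintegral_const, MeasurableSet.univ, Measure.restrict_apply, Set.univ_inter, one_mul]
    at h3
  rw [h3, ← setLIntegral_const, ← lintegral_indicator hBm]
  refine lintegral_mono fun x => ?_
  by_cases hx : cat u x ∈ B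
  · rw [Set.indicator_of_mem (show x ∈ {x | cat u x ∈ B} from hx), Set.indicator_of_mem hx, mul_one]
    exact h1 x
  · rw [Set.indicator_of_notMem (show x ∉ {x | cat u x ∈ B} from hx)]
    exact zero_le

end HB
namespace HB
variable {N : ℕ}

lemma mem_dyadic (n : ℕ) (k : ℤ) (x : ℝ) : x ∈ Lq.dyadic n k ↔ ⌈x * 2 ^ n⌉ = k := by
  have h : (0:ℝ) < 2 ^ n := by positivity
  rw [Int.ceil_eq_iff, Lq.dyadic, Set.mem_Ioc, div_lt_iff₀ h, le_div_iff₀ h]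

lemma measurableSet_dyadic (n : ℕ) (k : ℤ) : MeasurableSet (Lq.dyadic n k) := measurableSet_Ioc

lemma dyadic_sub (n m : ℕ) (k : ℤ) (x : ℝ) (hx : x ∈ Lq.dyadic (m + n) k) :
    Lq.dyadic (m + n) k ⊆ Lq.dyadic n ⌈x * 2 ^ n⌉ := by
  intro y hy
  rw [mem_dyadic, Int.ceil_eq_iff] at *
  set b := ⌈x * 2 ^ n⌉ with hb
  obtain ⟨hb1, hb2⟩ := Int.ceil_eq_iff.1 hb.symm
  have hm : (0:ℝ) < 2 ^ m := by positivity
  have e : ∀ z : ℝ, z * 2 ^ (m + n) = (z * 2 ^ n) * 2 ^ m := fun z => by ring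
  rw [e] at hx hy
  constructor
  · have h1 : ((b:ℝ) - 1) * 2 ^ m < k := lt_of_lt_of_le (by gcongr) hx.2
    have h2 : (b - 1) * 2 ^ m < k := by exact_mod_cast h1
    have h3 : (b - 1) * 2 ^ m ≤ k - 1 := by omega
    have h4 : ((b:ℝ) - 1) * 2 ^ m ≤ k - 1 := by exact_mod_cast h3
    exact lt_of_mul_lt_mul_right (h4.trans_lt hy.1) hm.le
  · have h1 : (k:ℝ) - 1 < b * 2 ^ m := lt_of_lt_of_le hx.1 (by gcongr)
    have h2 : k - 1 < b * 2 ^ m := by exact_mod_cast h1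
    have h3 : k ≤ b * 2 ^ m := by omega
    have h4 : (k:ℝ) ≤ b * 2 ^ m := by exact_mod_cast h3
    exact le_of_mul_le_mul_right (hy.2.trans h4) hm

lemma closure_dyadic (n : ℕ) (k : ℤ) :
    closure (Lq.dyadic n k) = Set.Icc (((k : ℝ) - 1) / 2 ^ n) ((k : ℝ) / 2 ^ n) := by
  unfold Lq.dyadic
  rw [closure_Ioc]
  refine ne_of_lt ?_
  gcongr
  linarith

lemma closure_inter (n : ℕ) (k l : ℤ) (x y : ℝ) (hx : x ∈ Lq.dyadic n k)
    (hy : y ∈ Lq.dyadic n l) (hxy : |x - y| ≤ 1 / 2 ^ n) :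
    (closure (Lq.dyadic n k) ∩ closure (Lq.dyadic n l)).Nonempty := by
  have hm : (0:ℝ) < 2 ^ n := by positivity
  rw [closure_dyadic, closure_dyadic]
  rw [mem_dyadic, Int.ceil_eq_iff] at hx hy
  have h1 : |x * 2 ^ n - y * 2 ^ n| ≤ 1 := by
    rw [← sub_mul, abs_mul, abs_of_pos hm]
    rwa [le_div_iff₀ hm] at hxy
  rw [abs_le] at h1
  have h2 : k - 1 ≤ l := by
    have : (k:ℝ) - 1 < l + 1 := by linarith [hx.1, hy.2]
    have : k - 1 < l + 1 := by exact_mod_cast this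
    omega
  have h3 : l - 1 ≤ k := by
    have : (l:ℝ) - 1 < k + 1 := by linarith [hx.2, hy.1]
    have : l - 1 < k + 1 := by exact_mod_cast this
    omega
  have h2' : (k:ℝ) - 1 ≤ l := by exact_mod_cast h2
  have h3' : (l:ℝ) - 1 ≤ k := by exact_mod_cast h3
  rcases le_total k l with h | h
  · have h' : (k:ℝ) ≤ l := by exact_mod_cast h
    refine ⟨(k:ℝ) / 2 ^ n, ⟨?_, le_rfl⟩, ?_, ?_⟩ <;> gcongr
    linarith
  · have h' : (l:ℝ) ≤ k := by exact_mod_cast h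
    refine ⟨(l:ℝ) / 2 ^ n, ⟨?_, ?_⟩, ?_, le_rfl⟩ <;> gcongr
    linarith


lemma rho_dyadic {Φ : C1IFS N} {π : SeqSp N → ℝ} (_hπ : IsCoding Φ π) (hπc : Continuous π)
    {ν : Measure (SeqSp N)} {ρ : Measure ℝ} (hρ : ρ = Measure.map π ν)
    (n : ℕ) (k : ℤ) : ρ (Lq.dyadic n k) = ν (π ⁻¹' Lq.dyadic n k) := by
  rw [hρ, Measure.map_apply hπc.measurable (measurableSet_dyadic n k)]

lemma rho_dyadic_zero {Φ : C1IFS N} {π : SeqSp N → ℝ} (hπ : IsCoding Φ π) (hπc : Continuous π)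
    {ν : Measure (SeqSp N)} {ρ : Measure ℝ} (hρ : ρ = Measure.map π ν)
    (n : ℕ) (k : ℤ) (hk : k ∉ Finset.Icc (0:ℤ) (2 ^ n)) :
    ρ (Lq.dyadic n k) = 0 := by
  rw [rho_dyadic hπ hπc hρ]
  have : π ⁻¹' Lq.dyadic n k = ∅ := by
    refine Set.eq_empty_iff_forall_notMem.2 fun x hx => hk ?_
    have h := pi_mem hπ x
    have hx' := (mem_dyadic n k _).1 hx
    rw [Finset.mem_Icc, ← hx']
    have hm : (0:ℝ) < 2 ^ n := by positivity
    refine ⟨Int.ceil_nonneg (mul_nonneg h.1 hm.le), Int.ceil_le.2 ?_⟩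
    push_cast
    exact mul_le_of_le_one_left hm.le h.2
  rw [this, measure_empty]

lemma rho_pull_le {Φ : C1IFS N} {π : SeqSp N → ℝ} (hπ : IsCoding Φ π) (hπc : Continuous π)
    {ν : Measure (SeqSp N)} {ρ : Measure ℝ} (hρ : ρ = Measure.map π ν)
    (u : Word N) (n : ℕ) (k : ℤ) :
    ρ (wordMap Φ u ⁻¹' Lq.dyadic n k) ≤ ν {x | cat u x ∈ π ⁻¹' Lq.dyadic n k} := by
  set D := Lq.dyadic n k
  have hD : MeasurableSet D := measurableSet_dyadic n k
  let g : ℝ → ℝ := Set.IccExtend (zero_le_one) ((Set.Icc (0:ℝ) 1).restrict (wordMap Φ u))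
  have hg : Continuous g := (wordMap_continuousOn Φ u).restrict.Icc_extend'
  have hge : ∀ x ∈ Set.Icc (0:ℝ) 1, g x = wordMap Φ u x := fun x hx => by
    simp only [g]
    rw [Set.IccExtend_of_mem _ _ hx]; rfl
  have hm : MeasurableSet (g ⁻¹' D ∪ (Set.Icc (0:ℝ) 1)ᶜ) :=
    (hg.measurable hD).union measurableSet_Icc.compl
  calc ρ (wordMap Φ u ⁻¹' D) ≤ ρ (g ⁻¹' D ∪ (Set.Icc (0:ℝ) 1)ᶜ) := by
        refine measure_mono fun x hx => ?_
        by_cases h : x ∈ Set.Icc (0:ℝ) 1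
        · left
          change g x ∈ D
          rw [hge x h]; exact hx
        · right; exact h
    _ = ν (π ⁻¹' (g ⁻¹' D ∪ (Set.Icc (0:ℝ) 1)ᶜ)) := by
        rw [hρ, Measure.map_apply hπc.measurable hm]
    _ ≤ _ := by
        refine measure_mono fun x hx => ?_
        have h := pi_mem hπ x
        rcases hx with hx | hx
        · change π (cat u x) ∈ D
          rw [pi_cat hπ, ← hge _ h]; exact hx
        · exact absurd h hx

lemma cover_bound {Φ : C1IFS N} {π : SeqSp N → ℝ} (hπ : IsCoding Φ π) (hπc : Continuous π)
    {ν : Measure (SeqSp N)} {ρ : Measure ℝ} (hρ : ρ = Measure.map π ν)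
    [IsProbabilityMeasure ν] (n : ℕ) (kt : ℤ) (hne : (Wn Φ π n).Nonempty)
    (U : Finset (Word N))
    (hU : ∀ u, u ∈ U ↔ u ∈ Wn Φ π n ∧ (Ku Φ π u ∩ Lq.dyadic n kt).Nonempty) :
    (ρ (Lq.dyadic n kt)).toReal ≤ ∑ u ∈ U, (ν (Symb.cylinder u)).toReal := by
  rw [← ENNReal.toReal_sum (fun u _ => measure_ne_top _ _)]
  refine ENNReal.toReal_mono (ENNReal.sum_ne_top.2 fun u _ => measure_ne_top _ _) ?_
  rw [rho_dyadic hπ hπc hρ]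
  refine (measure_mono fun x hx => ?_).trans (measure_biUnion_finset_le U Symb.cylinder)
  obtain ⟨u, hu, hxu⟩ := Wn_cover hπ n hne x
  refine Set.mem_iUnion₂.2 ⟨u, (hU u).2 ⟨hu, π x, ?_, hx⟩, hxu⟩
  obtain ⟨y, rfl⟩ := exists_cat_of_mem u x hxu
  rw [Ku_eq hπ]
  exact ⟨y, rfl⟩

lemma low_bound {Φ : C1IFS N} {π : SeqSp N → ℝ} (hπ : IsCoding Φ π) (hπc : Continuous π)
    {ν : Measure (SeqSp N)} {ρ : Measure ℝ} (hρ : ρ = Measure.map π ν)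
    [IsProbabilityMeasure ν] {ψ : SeqSp N → ℝ} (hψ : Continuous ψ)
    (hν : IsTransferFixed ψ ν) (M n l : ℕ) (k : ℤ)
    (hM : ∀ u ∈ Wn Φ π n, u.length ≤ M) (U : Finset (Word N)) (hU : ∀ u ∈ U, u ∈ Wn Φ π n) :
    Real.exp (-V ψ M) * ∑ u ∈ U, (ν (Symb.cylinder u)).toReal *
      (ρ (wordMap Φ u ⁻¹' Lq.dyadic l k)).toReal ≤ (ρ (Lq.dyadic l k)).toReal := by
  have : IsProbabilityMeasure ρ := by
    rw [hρ]; exact Measure.isProbabilityMeasure_map hπc.measurable.aemeasurable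
  have hBm : MeasurableSet (π ⁻¹' Lq.dyadic l k) := hπc.measurable (measurableSet_dyadic l k)
  have key : ∑ u ∈ U, ENNReal.ofReal (Real.exp (-V ψ M)) * (ν (Symb.cylinder u) *
      ρ (wordMap Φ u ⁻¹' Lq.dyadic l k)) ≤ ρ (Lq.dyadic l k) := by
    calc _ ≤ ∑ u ∈ U, ν (Symb.cylinder u ∩ π ⁻¹' Lq.dyadic l k) := by
          refine Finset.sum_le_sum fun u hu => ?_
          refine le_trans ?_ (gibbs hψ ν hν u _ hBm)
          rw [← mul_assoc]
          gcongr
          · exact V_mono ψ (hM u (hU u hu))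
          · exact rho_pull_le hπ hπc hρ u l k
      _ = ν (⋃ u ∈ U, Symb.cylinder u ∩ π ⁻¹' Lq.dyadic l k) := by
          rw [measure_biUnion_finset]
          · intro u hu v hv huv
            exact ((Wn_disj hπ n) (hU u hu) (hU v hv) huv).mono Set.inter_subset_left
              Set.inter_subset_left
          · exact fun u _ => (measurableSet_cylinder u).inter hBm
      _ ≤ ν (π ⁻¹' Lq.dyadic l k) := measure_mono (Set.iUnion₂_subset fun u _ => Set.inter_subset_right)
      _ = _ := (rho_dyadic hπ hπc hρ l k).symm
  have h2 := ENNReal.toReal_mono (measure_ne_top _ _) key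
  rw [ENNReal.toReal_sum] at h2
  · rw [Finset.mul_sum]
    simpa [ENNReal.toReal_mul, ENNReal.toReal_ofReal (Real.exp_pos _).le] using h2
  · intro u _
    finiteness

lemma concave_aux (q : ℝ) (hq : q ∈ Set.Ioo (0:ℝ) 1) {ι : Type*} (U : Finset ι) (p a : ι → ℝ)
    (c t : ℝ) (hc : 0 < c) (hp : ∀ u ∈ U, 0 ≤ p u) (ha : ∀ u ∈ U, 0 ≤ a u)
    (hP : 0 < ∑ u ∈ U, p u) (h : c * ∑ u ∈ U, p u * a u ≤ t) :
    c ^ q * (∑ u ∈ U, p u) ^ q * ∑ u ∈ U, (p u / ∑ u ∈ U, p u) * a u ^ q ≤ t ^ q := by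
  set P := ∑ u ∈ U, p u with hPd
  have h1 := (Real.concaveOn_rpow hq.1.le hq.2.le).le_map_sum (t := U) (w := fun u => p u / P)
    (p := a) (fun u hu => div_nonneg (hp u hu) hP.le)
    (by rw [← Finset.sum_div, ← hPd, div_self hP.ne']) (fun u hu => ha u hu)
  simp only [smul_eq_mul] at h1
  have hs : 0 ≤ ∑ u ∈ U, p u / P * a u :=
    Finset.sum_nonneg fun u hu => mul_nonneg (div_nonneg (hp u hu) hP.le) (ha u hu)
  calc _ ≤ c ^ q * P ^ q * (∑ u ∈ U, p u / P * a u) ^ q := by gcongr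
    _ = (c * ∑ u ∈ U, p u * a u) ^ q := by
      rw [← Real.mul_rpow hc.le hP.le, ← Real.mul_rpow (by positivity) hs]
      congr 1
      rw [mul_assoc, Finset.mul_sum]
      congr 1
      refine Finset.sum_congr rfl fun u _ => ?_
      field_simp
    _ ≤ _ := by
      refine Real.rpow_le_rpow ?_ h hq.1.le
      exact mul_nonneg hc.le (Finset.sum_nonneg fun u hu => mul_nonneg (hp u hu) (ha u hu))

end HB

/-- **Lemma 5.9.**  For a weak Gibbs measure `ρ` and every `0 < q < 1` there is a
sequence `(s_n)` of positive reals with `log s_n = o(n)` such that for all `n, m` and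
every `Q̃ ∈ D_n`,
`Σ_{B∈D_n, B∼Q̃} Σ_{Q∈D_{m+n}, Q⊆B} ρ(Q)^q ≥ s_n ρ(Q̃)^q min_{u∈W_n} Σ_{Q∈D_{m+n}} ρ(T_u⁻¹Q)^q`,
where `B ∼ Q̃` means the closures of `B` and `Q̃` intersect. -/
theorem heavy_box_estimate
    {N : ℕ} (Φ : C1IFS N) (hΦ : Φ.NontrivialIFS)
    (π : SeqSp N → ℝ) (hπ : IsCoding Φ π) (hπc : Continuous π)
    (ψ : SeqSp N → ℝ) (hψc : Continuous ψ) (hψn : Normalized ψ)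
    (ν : Measure (SeqSp N)) [IsProbabilityMeasure ν] (hν : IsTransferFixed ψ ν)
    (ρ : Measure ℝ) (hρ : ρ = Measure.map π ν)
    (q : ℝ) (hq : q ∈ Set.Ioo (0:ℝ) 1) :
    ∃ s : ℕ → ℝ, (∀ n, 0 < s n) ∧
      Filter.Tendsto (fun n => Real.log (s n) / n) Filter.atTop (nhds 0) ∧
      ∀ n m : ℕ, ∀ kt : ℤ, ρ (Lq.dyadic n kt) ≠ 0 →
        (∑' kB : ℤ,
          if ρ (Lq.dyadic n kB) ≠ 0 ∧
              (closure (Lq.dyadic n kB) ∩ closure (Lq.dyadic n kt)).Nonempty then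
            ∑' kQ : ℤ,
              if ρ (Lq.dyadic (m + n) kQ) ≠ 0 ∧ Lq.dyadic (m + n) kQ ⊆ Lq.dyadic n kB then
                (ρ (Lq.dyadic (m + n) kQ)).toReal ^ q
              else 0
          else 0) ≥
        s n * (ρ (Lq.dyadic n kt)).toReal ^ q *
          sInf ((fun u => pullbackLqSum Φ ρ u (m + n) q) '' Wn Φ π n) := by
  obtain ⟨L, hL0, hL⟩ := HB.exists_length_bound hπ
  have hprob : IsProbabilityMeasure ρ := by
    rw [hρ]; exact Measure.isProbabilityMeasure_map hπc.measurable.aemeasurable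
  refine ⟨fun n => Real.exp (-HB.V ψ (L * n)) ^ q, fun n => by positivity, ?_, ?_⟩
  · have h := (HB.V_tendsto hψc L hL0).const_mul (-q)
    rw [mul_zero] at h
    refine h.congr fun n => ?_
    rw [Real.log_rpow (Real.exp_pos _), Real.log_exp]
    ring
  intro n m kt hkt
  set c := Real.exp (-HB.V ψ (L * n)) with hc
  have hcpos : 0 < c := Real.exp_pos _
  -- the trivial case: no words
  rcases Set.eq_empty_or_nonempty (Wn Φ π n) with hemp | hne
  · rw [hemp, Set.image_empty, Real.sInf_empty, mul_zero]
    refine tsum_nonneg fun kB => ?_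
    split_ifs
    · refine tsum_nonneg fun kQ => ?_
      split_ifs <;> positivity
    · exact le_rfl
  set F := Finset.Icc (0:ℤ) (2 ^ (m + n)) with hF
  set G := Finset.Icc (0:ℤ) (2 ^ n) with hG
  -- pullback sums as finite sums
  have hpull : ∀ u, pullbackLqSum Φ ρ u (m + n) q = ∑ k ∈ F,
      if ρ (Lq.dyadic (m + n) k) = 0 then 0
        else (ρ (wordMap Φ u ⁻¹' Lq.dyadic (m + n) k)).toReal ^ q := by
    intro u
    refine tsum_eq_sum fun k hk => ?_
    rw [if_pos (HB.rho_dyadic_zero hπ hπc hρ _ k hk)]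
  have hpull0 : ∀ u, 0 ≤ pullbackLqSum Φ ρ u (m + n) q := by
    intro u
    rw [hpull]
    refine Finset.sum_nonneg fun k _ => ?_
    split_ifs <;> positivity
  set I := sInf ((fun u => pullbackLqSum Φ ρ u (m + n) q) '' Wn Φ π n) with hI
  have hI0 : 0 ≤ I := Real.sInf_nonneg (by rintro _ ⟨u, _, rfl⟩; exact hpull0 u)
  have hIle : ∀ u ∈ Wn Φ π n, I ≤ pullbackLqSum Φ ρ u (m + n) q := fun u hu =>
    csInf_le ⟨0, by rintro _ ⟨u, _, rfl⟩; exact hpull0 u⟩ ⟨u, hu, rfl⟩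
  -- the words whose cylinder meets the given box
  obtain ⟨U, hU⟩ : ∃ U : Finset (Word N), ∀ u, u ∈ U ↔
      u ∈ Wn Φ π n ∧ (Ku Φ π u ∩ Lq.dyadic n kt).Nonempty := by
    refine ⟨(HB.Wn_finite hπ n).toFinset.filter
      (fun u => (Ku Φ π u ∩ Lq.dyadic n kt).Nonempty), fun u => ?_⟩
    simp
  have hcov := HB.cover_bound hπ hπc hρ n kt hne U hU
  have hlow := fun k => HB.low_bound hπ hπc hρ hψc hν (L * n) n (m + n) k (hL n) U
    (fun u hu => ((hU u).1 hu).1)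
  set p : Word N → ℝ := fun u => (ν (Symb.cylinder u)).toReal with hp
  have hp0 : ∀ u, 0 ≤ p u := fun u => ENNReal.toReal_nonneg
  set P := ∑ u ∈ U, p u with hP
  have hρ0 : 0 < (ρ (Lq.dyadic n kt)).toReal := ENNReal.toReal_pos hkt (measure_ne_top _ _)
  have hP0 : 0 < P := hρ0.trans_le hcov
  -- left side as a finite double sum
  have hLHS : (∑' kB : ℤ,
          if ρ (Lq.dyadic n kB) ≠ 0 ∧
              (closure (Lq.dyadic n kB) ∩ closure (Lq.dyadic n kt)).Nonempty then
            ∑' kQ : ℤ,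
              if ρ (Lq.dyadic (m + n) kQ) ≠ 0 ∧ Lq.dyadic (m + n) kQ ⊆ Lq.dyadic n kB then
                (ρ (Lq.dyadic (m + n) kQ)).toReal ^ q
              else 0
          else 0) = ∑ kQ ∈ F, ∑ kB ∈ G,
            if (ρ (Lq.dyadic n kB) ≠ 0 ∧
              (closure (Lq.dyadic n kB) ∩ closure (Lq.dyadic n kt)).Nonempty) ∧
              (ρ (Lq.dyadic (m + n) kQ) ≠ 0 ∧ Lq.dyadic (m + n) kQ ⊆ Lq.dyadic n kB) then
                (ρ (Lq.dyadic (m + n) kQ)).toReal ^ q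
              else 0 := by
    rw [Finset.sum_comm, tsum_eq_sum (s := G)]
    · refine Finset.sum_congr rfl fun kB _ => ?_
      split_ifs with h
      · rw [tsum_eq_sum (s := F)]
        · refine Finset.sum_congr rfl fun kQ _ => ?_
          simp only [h, true_and, ne_eq, not_false_eq_true]
        · intro k hk
          rw [if_neg]
          exact fun h' => h'.1 (HB.rho_dyadic_zero hπ hπc hρ _ k hk)
      · symm
        refine Finset.sum_eq_zero fun kQ _ => ?_
        rw [if_neg]
        exact fun h' => h h'.1
    · intro k hk
      rw [if_neg]
      exact fun h' => h'.1 (HB.rho_dyadic_zero hπ hπc hρ _ k hk)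
  rw [hLHS, ge_iff_le]
  -- the estimate for one small box
  have hone : ∀ kQ ∈ F, c ^ q * P ^ q * ∑ u ∈ U, (p u / P) *
        (if ρ (Lq.dyadic (m + n) kQ) = 0 then 0
          else (ρ (wordMap Φ u ⁻¹' Lq.dyadic (m + n) kQ)).toReal ^ q) ≤
      ∑ kB ∈ G,
            if (ρ (Lq.dyadic n kB) ≠ 0 ∧
              (closure (Lq.dyadic n kB) ∩ closure (Lq.dyadic n kt)).Nonempty) ∧
              (ρ (Lq.dyadic (m + n) kQ) ≠ 0 ∧ Lq.dyadic (m + n) kQ ⊆ Lq.dyadic n kB) then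
                (ρ (Lq.dyadic (m + n) kQ)).toReal ^ q
              else 0 := by
    intro kQ _
    have hnn : ∀ kB ∈ G, (0:ℝ) ≤ if (ρ (Lq.dyadic n kB) ≠ 0 ∧
              (closure (Lq.dyadic n kB) ∩ closure (Lq.dyadic n kt)).Nonempty) ∧
              (ρ (Lq.dyadic (m + n) kQ) ≠ 0 ∧ Lq.dyadic (m + n) kQ ⊆ Lq.dyadic n kB) then
                (ρ (Lq.dyadic (m + n) kQ)).toReal ^ q
              else 0 := by
      intro kB _
      split_ifs <;> positivity
    by_cases hQ : ρ (Lq.dyadic (m + n) kQ) = 0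
    · simp only [hQ, if_true, mul_zero, Finset.sum_const_zero]
      exact Finset.sum_nonneg fun kB _ => by simp
    simp only [hQ, if_false]
    by_cases hall : ∀ u ∈ U, ρ (wordMap Φ u ⁻¹' Lq.dyadic (m + n) kQ) = 0
    · have : ∑ u ∈ U, (p u / P) *
          (ρ (wordMap Φ u ⁻¹' Lq.dyadic (m + n) kQ)).toReal ^ q = 0 := by
        refine Finset.sum_eq_zero fun u hu => ?_
        rw [hall u hu, ENNReal.toReal_zero, Real.zero_rpow hq.1.ne', mul_zero]
      rw [this, mul_zero]
      simpa only [hQ] using Finset.sum_nonneg hnn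
    push Not at hall
    obtain ⟨u, huU, hu⟩ := hall
    have hpos : ν {x | cat u x ∈ π ⁻¹' Lq.dyadic (m + n) kQ} ≠ 0 := fun h0 =>
      hu (le_antisymm ((HB.rho_pull_le hπ hπc hρ u (m + n) kQ).trans h0.le) zero_le)
    obtain ⟨x, hx⟩ := nonempty_of_measure_ne_zero hpos
    obtain ⟨huW, z, hzK, hzD⟩ := (hU u).1 huU
    have hx' : π (cat u x) ∈ Lq.dyadic (m + n) kQ := hx
    have hsub := HB.dyadic_sub n m kQ _ hx'
    set kB := ⌈π (cat u x) * 2 ^ n⌉ with hkB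
    have hxB : π (cat u x) ∈ Lq.dyadic n kB := hsub hx'
    have hB0 : ρ (Lq.dyadic n kB) ≠ 0 := fun h0 => hQ (measure_mono_null hsub h0)
    have hBG : kB ∈ G := by
      by_contra h
      exact hB0 (HB.rho_dyadic_zero hπ hπc hρ _ kB h)
    have hdist : |π (cat u x) - z| ≤ 1 / 2 ^ n := by
      rw [← Real.dist_eq]
      refine (Metric.dist_le_diam_of_mem (HB.Ku_bdd hπ u) ?_ hzK).trans huW.2.1
      rw [HB.Ku_eq hπ]; exact ⟨x, rfl⟩
    have hcl := HB.closure_inter n kB kt _ _ hxB hzD hdist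
    have hsingle := Finset.single_le_sum hnn hBG
    rw [if_pos ⟨⟨hB0, hcl⟩, hQ, hsub⟩] at hsingle
    have hconc := HB.concave_aux q hq U p
      (fun u => (ρ (wordMap Φ u ⁻¹' Lq.dyadic (m + n) kQ)).toReal) c _ hcpos
      (fun u _ => hp0 u) (fun u _ => ENNReal.toReal_nonneg) hP0 (hlow kQ)
    simpa only [hQ] using hconc.trans hsingle
  refine le_trans ?_ (Finset.sum_le_sum hone)
  rw [← Finset.mul_sum, Finset.sum_comm]
  simp only [← Finset.mul_sum, ← hpull]
  have hfin : I ≤ ∑ u ∈ U, p u / P * pullbackLqSum Φ ρ u (m + n) q := by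
    calc I = ∑ u ∈ U, p u / P * I := by
          rw [← Finset.sum_mul, ← Finset.sum_div, ← hP, div_self hP0.ne', one_mul]
      _ ≤ _ := Finset.sum_le_sum fun u hu => mul_le_mul_of_nonneg_left
          (hIle u ((hU u).1 hu).1) (div_nonneg (hp0 u) hP0.le)
  have hρP : (ρ (Lq.dyadic n kt)).toReal ^ q ≤ P ^ q := Real.rpow_le_rpow hρ0.le hcov hq.1.le
  have hcq : 0 ≤ c ^ q := by positivity
  gcongr
end
end
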